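/- For every hyperspecial vertex s₁ ∈ S, there exists a unique element a of the coset A_Λ* = {a'∘* : a' ∈ A_Λ} ⊆ Aut(W,S) such that a(s₀) = s₁. -/

import Mathlib

set_option synthInstance.maxHeartbeats 1000000
set_option maxHeartbeats 2000000

open scoped Classical

noncomputable section

namespace LY

/-! ## The coefficient field `ℚ(q)` -/

/-- The field `ℚ(q)` of rational functions. -/
abbrev K : Type := RatFunc ℚ

/-- The indeterminate `q`. -/
def qK : K := RatFunc.X

/-- The inclusion `ℤ[q] → ℚ(q)`. -/
def toK (p : Polynomial ℤ) : K := algebraMap (Polynomial ℚ) K (p.map (Int.castRingHom ℚ))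

/-- Evaluation of `p ∈ ℤ[q]` at `−q`, as an element of `ℚ(q)`; i.e. `p(−q)`. -/
def atNegQ (p : Polynomial ℤ) : K := Polynomial.eval₂ (Int.castRingHom K) (-qK) p

/-- The standard basis element `T_w` (resp. `a_w`) of the function model `W → ℚ(q)`
of the Hecke algebra (resp. of the Lusztig–Vogan module `M`). -/
def TT {W : Type} (w : W) : W → K := fun y => if y = w then 1 else 0

variable {B W : Type} [Group W] {M : CoxeterMatrix B}

/-- The Bruhat order on a Coxeter group: `u ≤ v` iff `v` is obtained from `u` by successive
right multiplications by reflections, each increasing the length. -/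
def BruhatLE (cs : CoxeterSystem M W) (u v : W) : Prop :=
  Relation.ReflTransGen
    (fun a b => cs.length a < cs.length b ∧ ∃ t, cs.IsReflection t ∧ b = a * t) u v

/-- Connectedness of the Coxeter diagram of `M`. -/
def DiagramConnected (M : CoxeterMatrix B) : Prop :=
  ∀ i j : B, Relation.ReflTransGen (fun a b => a ≠ b ∧ M a b ≠ 2) i j

/-- An automorphism of `W` preserving the set `S` of simple reflections, i.e. an element
of `A = Aut(W,S)`. -/
def IsDiagAut (cs : CoxeterSystem M W) (a : MulAut W) : Prop :=
  (⇑a) '' (Set.range cs.simple) = Set.range cs.simple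

/-! ## The affine setting -/

/-- All the data and axioms describing the setting: `(W,S)` is the Coxeter group of an
untwisted connected affine Dynkin diagram (an irreducible affine Weyl group); `Λ` is the
subgroup of translations (elements with finite conjugacy class), free abelian of finite
rank and of finite index; `s₀` is a hyperspecial vertex, `J = S − {s₀}`, `W_J` is the
finite subgroup generated by `J` with longest element `w_J`; `*` is the involution of `W`
given by `w* = w_J w w_J` on `W_J` and `λ* = −(ʷᴶλ)` on `Λ`; `pr` is the projection
`W → W_J` along `Λ`; `ρ` is the conjugation action of `W` on `Λ_ℚ ≅ ℚ^rank`
(via the identification `freeIso` of `Λ` with `ℤ^rank`). -/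
structure AffineData (cs : CoxeterSystem M W) where
  finB : Finite B
  conn : DiagramConnected M
  infW : Infinite W
  /-- the subgroup `Λ` of translations -/
  Lam : Subgroup W
  hLam_mem : ∀ w : W, w ∈ Lam ↔ {x : W | IsConj w x}.Finite
  hLam_normal : Lam.Normal
  hLam_comm : ∀ a ∈ Lam, ∀ b ∈ Lam, a * b = b * a
  hLam_index : Lam.FiniteIndex
  /-- `Λ` is free abelian of finite rank -/
  rank : ℕ
  freeIso : Lam ≃* Multiplicative (Fin rank → ℤ)
  /-- the hyperspecial vertex `s₀` -/
  s0 : W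
  hs0_S : s0 ∈ Set.range cs.simple
  /-- `s₀` is hyperspecial: the projection `W → W/Λ` restricts to an isomorphism from the
  subgroup generated by `S − {s₀}` onto `W/Λ`. -/
  hs0_hyper : ∀ w : W, ∃! u : W,
    u ∈ Subgroup.closure (Set.range cs.simple \ {s0}) ∧ w * u⁻¹ ∈ Lam
  hWJ_fin : (Subgroup.closure (Set.range cs.simple \ {s0}) : Set W).Finite
  /-- the longest element `w_J` of `W_J` -/
  wJ : W
  hwJ_mem : wJ ∈ Subgroup.closure (Set.range cs.simple \ {s0})
  hwJ_max : ∀ u ∈ Subgroup.closure (Set.range cs.simple \ {s0}), cs.length u ≤ cs.length wJ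
  /-- the involution `*` of `W` -/
  st : MulAut W
  hst_inv : ∀ w : W, st (st w) = w
  hst_J : ∀ u ∈ Subgroup.closure (Set.range cs.simple \ {s0}), st u = wJ * u * wJ
  hst_Lam : ∀ l ∈ Lam, st l = (wJ * l * wJ⁻¹)⁻¹
  hst_S : ∀ s ∈ Set.range cs.simple, st s ∈ Set.range cs.simple
  /-- lower Bruhat intervals are finite -/
  hBruhat_fin : ∀ w : W, {y : W | BruhatLE cs y w}.Finite
  /-- the projection `W → W_J` along `Λ` (`w ↦ w̄`) -/
  pr : W → W
  hpr : ∀ w : W, pr w ∈ Subgroup.closure (Set.range cs.simple \ {s0}) ∧ w * (pr w)⁻¹ ∈ Lam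
  /-- the conjugation action of `W` on `Λ_ℚ ≅ ℚ^rank` -/
  rho : W → ((Fin rank → ℚ) →ₗ[ℚ] (Fin rank → ℚ))
  hrho : ∀ (w : W) (l : Lam),
    rho w (fun i => ((Multiplicative.toAdd (freeIso l)) i : ℚ)) =
      fun i => ((Multiplicative.toAdd
        (freeIso ⟨w * (l : W) * w⁻¹, hLam_normal.conj_mem _ l.2 w⟩)) i : ℚ)

namespace AffineData

variable {cs : CoxeterSystem M W} (D : AffineData cs)

/-- The set `J = S − {s₀}`. -/
def Jset : Set W := Set.range cs.simple \ {D.s0}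

/-- The finite Weyl group `W_J`. -/
def WJ : Subgroup W := Subgroup.closure D.Jset

/-- `λ ∈ Λ` is a dominant translation (`λ ∈ Λ⁺`). -/
def IsDominant (l : W) : Prop :=
  l ∈ D.Lam ∧ cs.length (l * D.wJ) = cs.length l + cs.length D.wJ

/-- The embedding `Λ → Λ_ℚ = ℚ^rank`. -/
def iota (l : D.Lam) : Fin D.rank → ℚ :=
  fun i => ((Multiplicative.toAdd (D.freeIso l)) i : ℚ)

/-- `e(A)`: the dimension of the `(−1)`-eigenspace of a linear endomorphism `A` of `Λ_ℚ`. -/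
def eNeg (f : (Fin D.rank → ℚ) →ₗ[ℚ] (Fin D.rank → ℚ)) : ℕ :=
  Module.finrank ℚ (Module.End.eigenspace (f : Module.End ℚ (Fin D.rank → ℚ)) (-1))

/-- The map `A_u : λ ↦ ᵘ(λ*) = −(ᵘʷᴶλ)` on `Λ_ℚ`, for `u ∈ W_J`. -/
def Amap (u : W) : (Fin D.rank → ℚ) →ₗ[ℚ] (Fin D.rank → ℚ) := - D.rho (u * D.wJ)

/-- The invariant `φ(w) = e(A_{w̄}) − e(A_e)` for `w ∈ I_*`. -/
def phi (w : W) : ℤ := (D.eNeg (D.Amap (D.pr w)) : ℤ) - (D.eNeg (D.Amap 1) : ℤ)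

/-- The double coset `W_J x W_J`. -/
def DCoset (x : W) : Set W := {y : W | ∃ u ∈ D.WJ, ∃ v ∈ D.WJ, y = u * x * v}

/-- The set `H = J ∩ bJb⁻¹`. -/
def Hset (b : W) : Set W := D.Jset ∩ ((fun s => b * s * b⁻¹) '' D.Jset)

/-- The set `H* ⊆ J`, image of `H` under `*`. -/
def Hstar (b : W) : Set W := (⇑D.st) '' D.Hset b

/-- The subgroup `W_{H*}` generated by `H*`. -/
def WHstar (b : W) : Subgroup W := Subgroup.closure (D.Hstar b)

/-- The reflection representation `R'` of `W_{H*}`, as a subspace of `Λ_ℚ`: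
the span of the vectors `λ − ˢλ` for `λ ∈ Λ`, `s ∈ H*`. -/
def Rprime (b : W) : Submodule ℚ (Fin D.rank → ℚ) :=
  Submodule.span ℚ
    {v : Fin D.rank → ℚ | ∃ l : D.Lam, ∃ s ∈ D.Hstar b,
      v = D.iota l - D.iota ⟨s * (l : W) * s⁻¹, D.hLam_normal.conj_mem _ l.2 s⟩}

/-- `e'(A)`: the dimension of the `(−1)`-eigenspace of an endomorphism `A` of `R'`. -/
def eNeg' {b : W} (f : ↥(D.Rprime b) →ₗ[ℚ] ↥(D.Rprime b)) : ℕ :=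
  Module.finrank ℚ (Module.End.eigenspace (f : Module.End ℚ ↥(D.Rprime b)) (-1))

/-- `φ'(z) = e'(B_z) − e'(B_e)`, where `B_u : x ↦ −u·(w_{H*}·x)` on `R'`; here
`rho'` is the conjugation action of `W_{H*}` on `R'` and `wHs` is the longest element
of `W_{H*}`. -/
def phiP {b : W} (rho' : W → (↥(D.Rprime b) →ₗ[ℚ] ↥(D.Rprime b))) (wHs z : W) : ℤ :=
  (D.eNeg' (-(rho' (z * wHs))) : ℤ) - (D.eNeg' (-(rho' wHs)) : ℤ)

/-- Membership in `A_Λ ⊆ A = Aut(W,S)`: automorphisms acting on `Λ` as conjugation by some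
element of `W_J`. -/
def InALam (a : MulAut W) : Prop :=
  IsDiagAut cs a ∧ ∃ w ∈ D.WJ, ∀ l ∈ D.Lam, a l = w * l * w⁻¹

/-- Membership in the coset `A_Λ* = {a ∘ * : a ∈ A_Λ}`. -/
def InALamStar (c : MulAut W) : Prop := ∃ a : MulAut W, D.InALam a ∧ c = a * D.st

/-- The double coset `W_J x W_J^◇`, where `W_J^◇` is the subgroup generated by
`J^◇ = S − {s₁}`. -/
def DCosetDia (s1 : W) (x : W) : Set W :=
  {y : W | ∃ u ∈ D.WJ, ∃ v ∈ Subgroup.closure (Set.range cs.simple \ {s1}), y = u * x * v}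


end AffineData

/-! ## The Hecke algebra, the Lusztig–Vogan module, and the polynomials `P`, `P^σ` -/

/-- The Hecke algebra of `(W,S)` over `ℚ(q)` (modelled on functions `W → ℚ(q)`, with basis
`TT w = T_w`), together with its bar involution, and the Kazhdan–Lusztig polynomials
`P_{y,w} ∈ ℤ[q]` characterized by their defining properties. -/
structure HeckeData (cs : CoxeterSystem M W) where
  /-- the involution `q ↦ q⁻¹` of `ℚ(q)` -/
  barK : K →+* K
  hbarK_X : barK qK = qK⁻¹
  hbarK_inv : ∀ x, barK (barK x) = x
  /-- the multiplication of the Hecke algebra -/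
  mulH : (W → K) →ₗ[K] (W → K) →ₗ[K] (W → K)
  hmul_assoc : ∀ x y z : W → K, mulH (mulH x y) z = mulH x (mulH y z)
  hmul_one : ∀ x : W → K, mulH (TT 1) x = x ∧ mulH x (TT 1) = x
  hmul_TT : ∀ u v : W, cs.length (u * v) = cs.length u + cs.length v →
    mulH (TT u) (TT v) = TT (u * v)
  hmul_Ts : ∀ s ∈ Set.range cs.simple,
    mulH (TT s) (TT s) = (qK - 1) • TT s + qK • TT (1 : W)
  /-- the bar involution of the Hecke algebra: the ring involution with `q ↦ q⁻¹`,
  `T_w ↦ (T_{w⁻¹})⁻¹` -/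
  barH : (W → K) →+ (W → K)
  hbarH_inv : ∀ x, barH (barH x) = x
  hbarH_smul : ∀ (c : K) (x : W → K), barH (c • x) = barK c • barH x
  hbarH_mul : ∀ x y : W → K, barH (mulH x y) = mulH (barH x) (barH y)
  hbarH_T : ∀ w : W, mulH (barH (TT w)) (TT w⁻¹) = TT (1 : W) ∧
    mulH (TT w⁻¹) (barH (TT w)) = TT (1 : W)
  /-- the Kazhdan–Lusztig polynomials `P_{y,w}` -/
  P : W → W → Polynomial ℤ
  hP_supp : ∀ y w : W, ¬ BruhatLE cs y w → P y w = 0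
  hP_diag : ∀ w : W, P w w = 1
  hP_deg : ∀ y w : W, BruhatLE cs y w → y ≠ w →
    2 * (P y w).natDegree + 1 ≤ cs.length w - cs.length y
  hP_dual : ∀ w : W,
    (qK ^ cs.length w) • barH (fun y => if BruhatLE cs y w then toK (P y w) else 0)
      = fun y => if BruhatLE cs y w then toK (P y w) else 0

/-- The Lusztig–Vogan module `M` over the Hecke algebra `H'` with parameter `q²`, attached to
a length-preserving involutive automorphism `star` of `(W,S)`, together with its bar
involution, and the polynomials `P^σ_{y,w} ∈ ℤ[q]` (for `y, w ∈ I_*`) characterized by their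
defining properties.  Both `H'` and `M` are modelled on functions `W → ℚ(q)`; the basis
element `a_w` of `M` (for `w ∈ I_*`) is `TT w`. -/
structure LVData (cs : CoxeterSystem M W) (star : MulAut W) where
  /-- the involution `q ↦ q⁻¹` of `ℚ(q)` -/
  barK : K →+* K
  hbarK_X : barK qK = qK⁻¹
  hbarK_inv : ∀ x, barK (barK x) = x
  /-- the multiplication of the Hecke algebra `H'` with parameter `q²` -/
  mulH' : (W → K) →ₗ[K] (W → K) →ₗ[K] (W → K)
  hmul'_assoc : ∀ x y z : W → K, mulH' (mulH' x y) z = mulH' x (mulH' y z)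
  hmul'_one : ∀ x : W → K, mulH' (TT 1) x = x ∧ mulH' x (TT 1) = x
  hmul'_TT : ∀ u v : W, cs.length (u * v) = cs.length u + cs.length v →
    mulH' (TT u) (TT v) = TT (u * v)
  hmul'_Ts : ∀ s ∈ Set.range cs.simple,
    mulH' (TT s) (TT s) = (qK ^ 2 - 1) • TT s + (qK ^ 2) • TT (1 : W)
  /-- the bar involution of `H'` -/
  barH' : (W → K) →+ (W → K)
  hbarH'_inv : ∀ x, barH' (barH' x) = x
  hbarH'_smul : ∀ (c : K) (x : W → K), barH' (c • x) = barK c • barH' x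
  hbarH'_mul : ∀ x y : W → K, barH' (mulH' x y) = mulH' (barH' x) (barH' y)
  hbarH'_T : ∀ w : W, mulH' (barH' (TT w)) (TT w⁻¹) = TT (1 : W) ∧
    mulH' (TT w⁻¹) (barH' (TT w)) = TT (1 : W)
  /-- the action of `H'` on the module `M` -/
  actM : (W → K) →ₗ[K] (W → K) →ₗ[K] (W → K)
  hact_one : ∀ m : W → K, actM (TT 1) m = m
  hact_mul : ∀ (h h' : W → K) (m : W → K), actM (mulH' h h') m = actM h (actM h' m)
  hact1 : ∀ s ∈ Set.range cs.simple, ∀ w : W, star w = w⁻¹ →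
    s * w = w * star s → cs.length w < cs.length (s * w) →
    actM (TT s) (TT w) = qK • TT w + (qK + 1) • TT (s * w)
  hact2 : ∀ s ∈ Set.range cs.simple, ∀ w : W, star w = w⁻¹ →
    s * w = w * star s → cs.length (s * w) < cs.length w →
    actM (TT s) (TT w) = (qK ^ 2 - qK - 1) • TT w + (qK ^ 2 - qK) • TT (s * w)
  hact3 : ∀ s ∈ Set.range cs.simple, ∀ w : W, star w = w⁻¹ →
    s * w ≠ w * star s → cs.length w < cs.length (s * w) →
    actM (TT s) (TT w) = TT (s * w * star s)
  hact4 : ∀ s ∈ Set.range cs.simple, ∀ w : W, star w = w⁻¹ →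
    s * w ≠ w * star s → cs.length (s * w) < cs.length w →
    actM (TT s) (TT w) = (qK ^ 2 - 1) • TT w + (qK ^ 2) • TT (s * w * star s)
  /-- the bar involution of the module `M` -/
  barM : (W → K) →+ (W → K)
  hbarM_inv : ∀ m : W → K, barM (barM m) = m
  hbarM_smul : ∀ (c : K) (m : W → K), barM (c • m) = barK c • barM m
  hbarM_act : ∀ (h m : W → K), barM (actM h m) = actM (barH' h) (barM m)
  hbarM_one : barM (TT 1) = TT (1 : W)
  /-- the Lusztig–Vogan polynomials `P^σ_{y,w}` -/
  Psig : W → W → Polynomial ℤ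
  hPsig_supp : ∀ y w : W, ¬ (BruhatLE cs y w ∧ star y = y⁻¹) → Psig y w = 0
  hPsig_diag : ∀ w : W, star w = w⁻¹ → Psig w w = 1
  hPsig_deg : ∀ y w : W, star w = w⁻¹ → star y = y⁻¹ → BruhatLE cs y w → y ≠ w →
    2 * (Psig y w).natDegree + 1 ≤ cs.length w - cs.length y
  hPsig_dual : ∀ w : W, star w = w⁻¹ →
    (qK ^ (2 * cs.length w)) •
        barM (fun y => if BruhatLE cs y w ∧ star y = y⁻¹ then toK (Psig y w) else 0)
      = fun y => if BruhatLE cs y w ∧ star y = y⁻¹ then toK (Psig y w) else 0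

/-! ## The `Z`-polynomials -/

/-- `Z_w(q) = Σ_{y ≤ w} P_{y,w}(q) q^{ℓ(y)}`. -/
def Zpoly (cs : CoxeterSystem M W) (HD : HeckeData cs) (w : W) : K :=
  ∑ᶠ y : W, if BruhatLE cs y w then toK (HD.P y w) * qK ^ cs.length y else 0

/-- `Z_w(−q) = Σ_{y ≤ w} P_{y,w}(−q) (−q)^{ℓ(y)}`. -/
def ZpolyNeg (cs : CoxeterSystem M W) (HD : HeckeData cs) (w : W) : K :=
  ∑ᶠ y : W, if BruhatLE cs y w then atNegQ (HD.P y w) * (-qK) ^ cs.length y else 0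

/-- `Z^σ_w(q) = Σ_{y ≤ w, y ∈ I_*} P^σ_{y,w}(q) q^{ℓ(y)} ((q−1)/(q+1))^{φ(y)}`. -/
def Zsig (cs : CoxeterSystem M W) (D : AffineData cs) (LD : LVData cs D.st) (w : W) : K :=
  ∑ᶠ y : W, if BruhatLE cs y w ∧ D.st y = y⁻¹ then
    toK (LD.Psig y w) * qK ^ cs.length y * ((qK - 1) / (qK + 1)) ^ D.phi y else 0

/-!
Uniqueness: an element of `A_Λ` fixing `s₀` preserves `W_J`, hence is conjugation by some `w ∈ W_J`.
When conjugation by `w` preserves `S`, the set of inversions of `w⁻¹` is stable under conjugation;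
but it is finite, while translations move every reflection through infinitely many others. So
`w = 1`.

Existence: let `w` be the longest element of the parabolic subgroup generated by `S − {s₀, s₁}`.
The reflections `s₀` and `w s₁ w⁻¹` are parallel, i.e. their product lies in `Λ`. The isomorphism
`Λ ⋊ W_{S−{s₁}} ≅ Λ ⋊ W_J` that is the identity on `Λ`, followed by conjugation by `w` and then by
`w_J`, therefore permutes `S` and sends `s₁` to `s₀`.

Parallelism without root systems: a reflection `t` defines a homomorphism `height t : Λ → ℤ` whose
sign on `a` records whether `t` is eventually a left inversion of `a ^ j`, and parallel reflections
have proportional heights. Let `t ∈ W_J` be parallel to `w s₀ w⁻¹`. If `t ≠ s₁`, conjugation by `w`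
takes the inverses both of a regular dominant translation `σ` and of its analogue `ρ` negative only
at `s₁` to translations dominant for `S − {s₁}`. The reflection of `W_{S−{s₁}}` parallel to `s₁`
then has heights of the same sign on `σ` and `ρ`, whereas the heights at `s₁` have opposite signs.
-/

/-! ## Left inversions -/

lemma eq_one_of_ne_zero_zmod_two {e : ZMod 2} (h : e ≠ 0) : e = 1 :=
  Fin.eq_one_of_ne_zero e h

section InversionParity

variable {B W : Type*} [Group W] {M : CoxeterMatrix B} (cs : CoxeterSystem M W)

/-- The involution of `W × ℤ/2` by which a simple reflection acts on signed reflections: it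
conjugates the first component and changes the sign exactly of the simple reflection itself. It is
defined on all of `W × ℤ/2`, so that no subtype of reflections is needed. -/
def simplePerm (i : B) : Equiv.Perm (W × ZMod 2) :=
  Function.Involutive.toPerm
    (fun p => (cs.simple i * p.1 * cs.simple i, p.2 + if p.1 = cs.simple i then 1 else 0)) <| by
    rintro ⟨x, e⟩
    have hx : cs.simple i * x * cs.simple i = cs.simple i ↔ x = cs.simple i := by
      rw [mul_eq_right, mul_eq_one_iff_eq_inv', cs.inv_simple]
    simp only [hx, add_assoc, CharTwo.add_self_eq_zero, add_zero]
    simp [mul_assoc]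

lemma simplePerm_apply (i : B) (x : W) (e : ZMod 2) :
    simplePerm cs i (x, e) =
      (cs.simple i * x * cs.simple i, e + if x = cs.simple i then 1 else 0) :=
  rfl

lemma simplePerm_inv (i : B) : (simplePerm cs i)⁻¹ = simplePerm cs i :=
  Function.Involutive.toPerm_symm _

lemma count_leftInvSeq_cons (i : B) (ω : List B) (x : W) :
    (cs.leftInvSeq (i :: ω)).count x =
      (cs.leftInvSeq ω).count (cs.simple i * x * cs.simple i) +
        if x = cs.simple i then 1 else 0 := by
  have hx : x = MulAut.conj (cs.simple i) (cs.simple i * x * cs.simple i) := by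
    simp [mul_assoc]
  have hmap : ((cs.leftInvSeq ω).map (MulAut.conj (cs.simple i))).count x =
      (cs.leftInvSeq ω).count (cs.simple i * x * cs.simple i) := by
    conv_lhs => rw [hx]
    exact List.count_map_of_injective _ _ (MulAut.conj (cs.simple i)).injective _
  rw [CoxeterSystem.leftInvSeq, List.count_cons, hmap]
  simp only [beq_iff_eq, eq_comm (a := x)]

lemma inv_prod_map_simplePerm_apply (ω : List B) (x : W) (e : ZMod 2) :
    (ω.map (simplePerm cs)).prod⁻¹ (x, e) =
      ((cs.wordProd ω)⁻¹ * x * cs.wordProd ω, e + (cs.leftInvSeq ω).count x) := by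
  induction ω generalizing x e with
  | nil => simp
  | cons i ω ih =>
    rw [List.map_cons, List.prod_cons, mul_inv_rev, Equiv.Perm.mul_apply, simplePerm_inv,
      simplePerm_apply, ih, count_leftInvSeq_cons, cs.wordProd_cons]
    ext
    · simp [mul_assoc]
    · push_cast
      ring

-- The second half of the sequence repeats the first.
lemma even_count_leftInvSeq_alternatingWord (i j : B) (x : W) :
    Even ((cs.leftInvSeq (CoxeterSystem.alternatingWord i j (2 * M i j))).count x) := by
  set l := cs.leftInvSeq (CoxeterSystem.alternatingWord i j (2 * M i j)) with hl
  have hlen : l.length = 2 * M i j := by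
    rw [hl, cs.length_leftInvSeq, CoxeterSystem.length_alternatingWord]
  have hperiod : l.take (M i j) = l.drop (M i j) := by
    refine List.ext_getElem (by simp [hlen]; omega) fun k hk _ => ?_
    have hk' : k < M i j := by simp at hk; omega
    rw [List.getElem_take, List.getElem_drop,
      cs.getElem_leftInvSeq_alternatingWord i j _ k (by omega),
      cs.getElem_leftInvSeq_alternatingWord i j _ (M i j + k) (by omega)]
    rw [cs.prod_alternatingWord_eq_mul_pow, cs.prod_alternatingWord_eq_mul_pow]
    have hk₁ : ¬ Even (2 * k + 1) := by simp
    have hk₂ : ¬ Even (2 * (M i j + k) + 1) := by simp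
    have hd₁ : (2 * k + 1) / 2 = k := by omega
    have hd₂ : (2 * (M i j + k) + 1) / 2 = M i j + k := by omega
    rw [if_neg hk₁, if_neg hk₂, hd₁, hd₂, pow_add, M.symmetric i j, cs.simple_mul_simple_pow,
      one_mul]
  rw [← List.take_append_drop (M i j) l, List.count_append, ← hperiod]
  exact ⟨_, rfl⟩

lemma prod_map_alternatingWord {G : Type*} [Group G] (f : B → G) (i j : B) (m : ℕ) :
    ((CoxeterSystem.alternatingWord i j (2 * m)).map f).prod = (f i * f j) ^ m := by
  induction m with
  | zero => simp [CoxeterSystem.alternatingWord]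
  | succ m ih =>
    have hm : 2 * (m + 1) = 2 * m + 1 + 1 := by ring
    rw [hm, CoxeterSystem.alternatingWord_succ', CoxeterSystem.alternatingWord_succ',
      if_neg (by simp), if_pos (by simp)]
    simp [ih, pow_succ', mul_assoc]

lemma isLiftable_simplePerm : M.IsLiftable (simplePerm cs) := by
  intro i j
  rw [← prod_map_alternatingWord, ← inv_inj, inv_one]
  ext1 ⟨x, e⟩
  have hword : cs.wordProd (CoxeterSystem.alternatingWord i j (2 * M i j)) = 1 := by
    rw [CoxeterSystem.wordProd, prod_map_alternatingWord, cs.simple_mul_simple_pow]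
  rw [inv_prod_map_simplePerm_apply, hword,
    (ZMod.natCast_eq_zero_iff_even).2 (even_count_leftInvSeq_alternatingWord cs i j x)]
  simp

/-- The permutation representation of a Coxeter group on its signed reflections. -/
def signedPerm : W →* Equiv.Perm (W × ZMod 2) :=
  cs.lift ⟨simplePerm cs, isLiftable_simplePerm cs⟩

lemma signedPerm_wordProd (ω : List B) :
    signedPerm cs (cs.wordProd ω) = (ω.map (simplePerm cs)).prod := by
  have hcomp : ⇑(signedPerm cs) ∘ cs.simple = simplePerm cs := by
    ext1 i
    exact cs.lift_apply_simple (isLiftable_simplePerm cs) i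
  rw [CoxeterSystem.wordProd, map_list_prod, List.map_map, hcomp]

/-- `invParity cs w t` is `1` if `t` is a left inversion of `w` and `0` otherwise (see
`invParity_eq_one_iff`). Defined through `signedPerm`, it satisfies the cocycle identity
`invParity_mul` for all elements, with no additivity of lengths. -/
def invParity (w t : W) : ZMod 2 := (signedPerm cs w⁻¹ (t, 0)).2

lemma signedPerm_inv_apply (w x : W) (e : ZMod 2) :
    signedPerm cs w⁻¹ (x, e) = (w⁻¹ * x * w, e + invParity cs w x) := by
  obtain ⟨ω, rfl⟩ := cs.wordProd_surjective w
  simp only [invParity, map_inv, signedPerm_wordProd, inv_prod_map_simplePerm_apply, zero_add]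

lemma invParity_wordProd (ω : List B) (t : W) :
    invParity cs (cs.wordProd ω) t = (cs.leftInvSeq ω).count t := by
  rw [invParity, map_inv, signedPerm_wordProd, inv_prod_map_simplePerm_apply, zero_add]

lemma invParity_mul (u w t : W) :
    invParity cs (u * w) t = invParity cs u t + invParity cs w (u⁻¹ * t * u) := by
  rw [invParity, mul_inv_rev, map_mul, Equiv.Perm.mul_apply, signedPerm_inv_apply,
    signedPerm_inv_apply, zero_add]

lemma invParity_one (t : W) : invParity cs 1 t = 0 := by
  rw [← cs.wordProd_nil, invParity_wordProd, cs.leftInvSeq_nil, List.count_nil, Nat.cast_zero]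

lemma invParity_simple (i : B) (t : W) :
    invParity cs (cs.simple i) t = if t = cs.simple i then 1 else 0 := by
  have h := invParity_wordProd cs [i] t
  rw [cs.wordProd_singleton, cs.leftInvSeq_singleton, List.count_singleton] at h
  simp only [h, beq_iff_eq, eq_comm (b := t), Nat.cast_ite, Nat.cast_one, Nat.cast_zero]

lemma invParity_inv (w t : W) : invParity cs w⁻¹ t = invParity cs w (w * t * w⁻¹) := by
  have h := invParity_mul cs w w⁻¹ (w * t * w⁻¹)
  rw [mul_inv_cancel, invParity_one, show w⁻¹ * (w * t * w⁻¹) * w = t by group] at h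
  exact (CharTwo.add_eq_zero.1 h.symm).symm

lemma invParity_conj_mul (u w t : W) :
    invParity cs (u * w) (u * t * u⁻¹) = invParity cs u (u * t * u⁻¹) + invParity cs w t := by
  rw [invParity_mul, show u⁻¹ * (u * t * u⁻¹) * u = t by group]

variable {cs}

lemma invParity_self {t : W} (ht : cs.IsReflection t) : invParity cs t t = 1 := by
  obtain ⟨u, i, rfl⟩ := ht
  have h := invParity_conj_mul cs u (cs.simple i * u⁻¹) (cs.simple i)
  rw [invParity_mul cs (cs.simple i), invParity_simple, if_pos rfl, inv_mul_cancel, one_mul,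
    invParity_inv, add_left_comm, CharTwo.add_self_eq_zero, add_zero, ← mul_assoc] at h
  exact h

lemma isReflection_ne_one {t : W} (ht : cs.IsReflection t) : t ≠ 1 := by
  rintro rfl
  exact zero_ne_one ((invParity_one cs 1).symm.trans (invParity_self ht))

lemma mem_leftInvSeq_of_invParity_ne_zero {ω : List B} {t : W}
    (h : invParity cs (cs.wordProd ω) t ≠ 0) : t ∈ cs.leftInvSeq ω := by
  by_contra hmem
  exact h (by rw [invParity_wordProd, List.count_eq_zero.2 hmem, Nat.cast_zero])

lemma isLeftInversion_of_invParity_ne_zero {w t : W} (h : invParity cs w t ≠ 0) :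
    cs.IsLeftInversion w t := by
  obtain ⟨ω, hω, rfl⟩ := cs.exists_isReduced w
  exact cs.isLeftInversion_of_mem_leftInvSeq hω (mem_leftInvSeq_of_invParity_ne_zero h)

lemma invParity_eq_one_iff {w t : W} : invParity cs w t = 1 ↔ cs.IsLeftInversion w t := by
  refine ⟨fun h => isLeftInversion_of_invParity_ne_zero (by simp [h]), fun ⟨ht, hlt⟩ => ?_⟩
  refine eq_one_of_ne_zero_zmod_two fun h => hlt.not_gt ?_
  have htw : invParity cs (t * w) t = 1 := by
    rw [invParity_mul, invParity_self ht, ht.inv, ht.mul_self, one_mul, h, add_zero]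
  have hlt' := (isLeftInversion_of_invParity_ne_zero (htw.trans_ne one_ne_zero)).2
  rwa [← mul_assoc, ht.mul_self, one_mul] at hlt'

lemma finite_setOf_invParity_ne_zero (w : W) : {t | invParity cs w t ≠ 0}.Finite := by
  obtain ⟨ω, rfl⟩ := cs.wordProd_surjective w
  exact (cs.leftInvSeq ω).finite_toSet.subset fun t => mem_leftInvSeq_of_invParity_ne_zero

lemma exists_mul_wordProd_eq_eraseIdx {ω : List B} {t : W}
    (h : invParity cs (cs.wordProd ω) t ≠ 0) :
    ∃ j < ω.length, t * cs.wordProd ω = cs.wordProd (ω.eraseIdx j) := by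
  obtain ⟨j, hj, rfl⟩ := List.mem_iff_getElem.1 (mem_leftInvSeq_of_invParity_ne_zero h)
  refine ⟨j, by simpa using hj, ?_⟩
  rw [← cs.getD_leftInvSeq_mul_wordProd, List.getD_eq_getElem _ _ hj]

lemma eq_one_of_invParity_simple_eq_zero {w : W} (h : ∀ i, invParity cs w (cs.simple i) = 0) :
    w = 1 := by
  by_contra hw
  obtain ⟨i, hi⟩ := cs.exists_leftDescent_of_ne_one hw
  rw [← cs.isLeftInversion_simple_iff_isLeftDescent, ← invParity_eq_one_iff, h i] at hi
  exact zero_ne_one hi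

end InversionParity


/-! ## Standard parabolic subgroups -/

section Parabolic

variable {B W : Type*} [Group W] {M : CoxeterMatrix B} {cs : CoxeterSystem M W} {I : Set W}

lemma mem_closure_of_invParity_ne_zero (hI : I ⊆ Set.range cs.simple) {u t : W}
    (hu : u ∈ Subgroup.closure I) (h : invParity cs u t ≠ 0) : t ∈ Subgroup.closure I := by
  have hconj {v x : W} (hv : v ∈ Subgroup.closure I) (hx : v⁻¹ * x * v ∈ Subgroup.closure I) :
      x ∈ Subgroup.closure I := by
    rwa [mul_mem_cancel_right hv, mul_mem_cancel_left (inv_mem hv)] at hx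
  induction hu using Subgroup.closure_induction generalizing t with
  | mem s hs =>
    obtain ⟨i, rfl⟩ := hI hs
    rw [invParity_simple] at h
    rw [(ite_ne_right_iff.1 h).1]
    exact Subgroup.subset_closure hs
  | one => exact absurd (invParity_one cs t) h
  | mul u w hu _ ihu ihw =>
    by_cases h₁ : invParity cs u t = 0
    · exact hconj hu (ihw (by rwa [invParity_mul, h₁, zero_add] at h))
    · exact ihu h₁
  | inv u hu ih =>
    rw [invParity_inv] at h
    exact hconj (inv_mem hu) (by simpa using ih h)

lemma exists_isReduced_of_mem_closure (hI : I ⊆ Set.range cs.simple) {u : W}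
    (hu : u ∈ Subgroup.closure I) :
    ∃ ω : List B, cs.IsReduced ω ∧ cs.wordProd ω = u ∧ ∀ i ∈ ω, cs.simple i ∈ I := by
  have hinv : I⁻¹ ⊆ I := by
    intro x hx
    obtain ⟨i, hi⟩ := hI hx
    rwa [← inv_inv x, ← hi, cs.inv_simple, hi]
  rw [← Subgroup.mem_toSubmonoid, Subgroup.closure_toSubmonoid,
    Set.union_eq_self_of_subset_right hinv] at hu
  induction hu using Submonoid.closure_induction_left with
  | one => exact ⟨[], by simp [CoxeterSystem.IsReduced], by simp, by simp⟩
  | mul_left s hs u _ ih =>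
    obtain ⟨ω, hω, rfl, hωI⟩ := ih
    obtain ⟨i, rfl⟩ := hI hs
    by_cases h : invParity cs (cs.wordProd ω) (cs.simple i) = 0
    · refine ⟨i :: ω, ?_, cs.wordProd_cons i ω, by simpa using ⟨hs, hωI⟩⟩
      have hdesc : ¬ cs.IsLeftDescent (cs.wordProd ω) i := fun hi => by
        rw [← cs.isLeftInversion_simple_iff_isLeftDescent, ← invParity_eq_one_iff, h] at hi
        exact zero_ne_one hi
      rw [CoxeterSystem.IsReduced, cs.wordProd_cons, List.length_cons,
        cs.not_isLeftDescent_iff.1 hdesc, hω.eq]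
    · obtain ⟨j, hj, heq⟩ := exists_mul_wordProd_eq_eraseIdx h
      refine ⟨ω.eraseIdx j, ?_, heq.symm, fun k hk => hωI k (List.mem_of_mem_eraseIdx hk)⟩
      have hlow := cs.length_wordProd_le (ω.eraseIdx j)
      have hup : cs.length (cs.wordProd ω) ≤ cs.length (cs.simple i * cs.wordProd ω) + 1 := by
        rcases cs.length_simple_mul (cs.wordProd ω) i with h | h <;> omega
      rw [CoxeterSystem.IsReduced, ← heq]
      rw [← heq] at hlow
      have hlen := List.length_eraseIdx_add_one hj
      have hω' := hω.eq
      omega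

lemma mem_of_simple_mem_closure (hI : I ⊆ Set.range cs.simple) {s : W}
    (hs : s ∈ Set.range cs.simple) (h : s ∈ Subgroup.closure I) : s ∈ I := by
  obtain ⟨i, rfl⟩ := hs
  obtain ⟨ω, hω, hprod, hωI⟩ := exists_isReduced_of_mem_closure hI h
  have hlen : ω.length = 1 := by rw [← hω.eq, hprod, cs.length_simple]
  obtain ⟨j, rfl⟩ := List.length_eq_one_iff.1 hlen
  rw [← hprod, cs.wordProd_singleton]
  exact hωI j (List.mem_singleton_self j)

lemma exists_mem_invParity_eq_one (hI : I ⊆ Set.range cs.simple) {u : W}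
    (hu : u ∈ Subgroup.closure I) (h1 : u ≠ 1) : ∃ s ∈ I, invParity cs u s = 1 := by
  obtain ⟨i, hi⟩ := cs.exists_leftDescent_of_ne_one h1
  have hdesc := invParity_eq_one_iff.2 ((cs.isLeftInversion_simple_iff_isLeftDescent u i).2 hi)
  exact ⟨cs.simple i, mem_of_simple_mem_closure hI ⟨i, rfl⟩
    (mem_closure_of_invParity_ne_zero hI hu (hdesc.trans_ne one_ne_zero)), hdesc⟩

lemma exists_mem_closure_mul_invParity_eq_zero (w : W) :
    ∃ v ∈ Subgroup.closure I, ∀ t ∈ Subgroup.closure I, invParity cs (v * w) t = 0 := by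
  let f (v : Subgroup.closure I) : ℕ := cs.length (v * w)
  let v := Function.argmin f
  refine ⟨v, v.2, fun t ht => ?_⟩
  by_contra h
  have hlt := (isLeftInversion_of_invParity_ne_zero h).2
  rw [← mul_assoc] at hlt
  exact hlt.not_ge (Function.argmin_le f (⟨t, ht⟩ * v))

lemma invParity_eq_zero_of_mem_closure (hI : I ⊆ Set.range cs.simple) {w : W}
    (h : ∀ s ∈ I, invParity cs w s = 0) {t : W} (ht : t ∈ Subgroup.closure I) :
    invParity cs w t = 0 := by
  obtain ⟨v, hv, hvw⟩ := exists_mem_closure_mul_invParity_eq_zero (cs := cs) (I := I) w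
  have hparity {x : W} (hx : x ∈ Subgroup.closure I) :
      invParity cs w x = invParity cs v⁻¹ x := by
    have hmul := invParity_mul cs v⁻¹ (v * w) x
    rwa [inv_mul_cancel_left, hvw _ (mul_mem (mul_mem (inv_mem (inv_mem hv)) hx) (inv_mem hv)),
      add_zero] at hmul
  have hv1 : v⁻¹ = 1 := by
    by_contra hne
    obtain ⟨s, hs, hs1⟩ := exists_mem_invParity_eq_one hI (inv_mem hv) hne
    rw [← hparity (Subgroup.subset_closure hs), h s hs] at hs1
    exact zero_ne_one hs1
  rw [hparity ht, hv1, invParity_one]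

variable (cs I) in
/-- `w` is a longest element of the standard parabolic subgroup generated by `I`. -/
def IsLongest (w : W) : Prop :=
  w ∈ Subgroup.closure I ∧ ∀ u ∈ Subgroup.closure I, cs.length u ≤ cs.length w

lemma exists_isLongest (hfin : (Subgroup.closure I : Set W).Finite) : ∃ w, IsLongest cs I w :=
  Set.exists_max_image _ _ hfin ⟨1, one_mem _⟩

namespace IsLongest

variable {w : W}

lemma invParity_eq_one (hw : IsLongest cs I w) {t : W} (ht : cs.IsReflection t)
    (htI : t ∈ Subgroup.closure I) : invParity cs w t = 1 :=
  invParity_eq_one_iff.2 ⟨ht, (hw.2 _ (mul_mem htI hw.1)).lt_of_ne (ht.length_mul_right_ne w)⟩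

lemma mul_self (hI : I ⊆ Set.range cs.simple) (hw : IsLongest cs I w) : w * w = 1 := by
  refine eq_one_of_invParity_simple_eq_zero (cs := cs) fun i => ?_
  by_contra h
  have hi := mem_closure_of_invParity_ne_zero hI (mul_mem hw.1 hw.1) h
  have hwi : w⁻¹ * cs.simple i * w ∈ Subgroup.closure I :=
    mul_mem (mul_mem (inv_mem hw.1) hi) hw.1
  have hrefl := (cs.isReflection_simple i).conj w⁻¹
  rw [inv_inv] at hrefl
  rw [invParity_mul, hw.invParity_eq_one (cs.isReflection_simple i) hi,
    hw.invParity_eq_one hrefl hwi] at h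
  exact h (CharTwo.add_self_eq_zero 1)

lemma inv_eq (hI : I ⊆ Set.range cs.simple) (hw : IsLongest cs I w) : w⁻¹ = w :=
  inv_eq_of_mul_eq_one_left (hw.mul_self hI)

/- `w s w⁻¹` is the only reflection of the parabolic subgroup that is not an inversion of `w s`,
so it is found as the simple reflection provided by `exists_mem_invParity_eq_one`. -/
lemma conj_mem (hI : I ⊆ Set.range cs.simple) (hw : IsLongest cs I w) {s : W} (hs : s ∈ I) :
    w * s * w⁻¹ ∈ I := by
  obtain ⟨i, rfl⟩ := hI hs
  have hsI := Subgroup.subset_closure (k := I) hs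
  obtain ⟨s', hs', hinv⟩ := exists_mem_invParity_eq_one hI
    (mul_mem (mul_mem hw.1 hsI) (inv_mem hw.1))
    (by simpa [conj_eq_one_iff] using isReflection_ne_one (cs.isReflection_simple i))
  obtain ⟨j, rfl⟩ := hI hs'
  have hsj := Subgroup.subset_closure (k := I) hs'
  suffices hij : w⁻¹ * cs.simple j * w = cs.simple i by
    rwa [← hij, show w * (w⁻¹ * cs.simple j * w) * w⁻¹ = cs.simple j by group]
  by_contra hij
  have hcs : w * cs.simple i * w⁻¹ ∈ Subgroup.closure I := mul_mem (mul_mem hw.1 hsI) (inv_mem hw.1)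
  have hrefl := (cs.isReflection_simple j).conj (w * cs.simple i * w⁻¹)
  have hmem := mul_mem (mul_mem hcs hsj) (inv_mem hcs)
  rw [mul_assoc w, invParity_mul, hw.invParity_eq_one (cs.isReflection_simple j) hsj,
    invParity_mul, invParity_simple, if_neg hij, zero_add, invParity_inv, cs.inv_simple] at hinv
  rw [show w * (cs.simple i * (w⁻¹ * cs.simple j * w) * cs.simple i) * w⁻¹ =
    w * cs.simple i * w⁻¹ * cs.simple j * (w * cs.simple i * w⁻¹)⁻¹ by
      simp only [mul_inv_rev, inv_inv, cs.inv_simple, mul_assoc], hw.invParity_eq_one hrefl hmem,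
    CharTwo.add_self_eq_zero] at hinv
  exact zero_ne_one hinv

end IsLongest

end Parabolic


/-! ## Almost invariant functions -/

section TranslationIndex

variable {G : Type*} [CommGroup G] {χ : G → ℤ}

/-- Every translate of `χ` differs from `χ` at only finitely many points. -/
def IsAlmostInvariant (χ : G → ℤ) : Prop := ∀ g, {q | χ (q * g) ≠ χ q}.Finite

/-- The total change of `χ` under translation by `g`. If `χ` is the indicator function of a ray in
`ℤ` this is a multiple of `g`. It is meaningful only for almost invariant `χ`. -/
def translationIndex (χ : G → ℤ) (g : G) : ℤ := ∑ᶠ q, (χ (q * g) - χ q)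

namespace IsAlmostInvariant

lemma hasFiniteSupport (hχ : IsAlmostInvariant χ) (g : G) :
    Function.HasFiniteSupport fun q => χ (q * g) - χ q := by
  simpa only [Function.HasFiniteSupport, Function.support, sub_ne_zero] using hχ g

lemma translationIndex_mul (hχ : IsAlmostInvariant χ) (g h : G) :
    translationIndex χ (g * h) = translationIndex χ g + translationIndex χ h := by
  have hshift : translationIndex χ h = ∑ᶠ q, (χ (q * g * h) - χ (q * g)) :=
    (finsum_comp_equiv (Equiv.mulRight g)).symm
  have hfin : Function.HasFiniteSupport fun q => χ (q * g * h) - χ (q * g) :=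
    (hχ.hasFiniteSupport h).comp_of_injective (Equiv.mulRight g).injective
  rw [hshift, translationIndex, translationIndex, ← finsum_add_distrib (hχ.hasFiniteSupport g) hfin]
  refine finsum_congr fun q => ?_
  rw [← mul_assoc]
  ring

lemma translationIndex_pow (hχ : IsAlmostInvariant χ) (g : G) (n : ℕ) :
    translationIndex χ (g ^ n) = n * translationIndex χ g := by
  induction n with
  | zero => simp [translationIndex]
  | succ n ih =>
    rw [pow_succ, hχ.translationIndex_mul, ih]
    push_cast
    ring

/- `N` is chosen to work for the finitely many points where `χ` changes; between `g` and
`g * ρ ^ (2 * N)` any decrease would have to pass through such a point. -/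
lemma exists_apply_le_apply_mul_pow (hχ : IsAlmostInvariant χ) (h01 : ∀ q, χ q = 0 ∨ χ q = 1)
    {ρ : G} (hρ : ∀ q, ∀ᶠ j : ℕ in Filter.atTop, χ (q * ρ ^ j) = 1 ∧ χ (q * ρ⁻¹ ^ j) = 0) :
    ∃ N : ℕ, ∀ n ≥ N, ∀ q, χ q ≤ χ (q * ρ ^ n) := by
  obtain ⟨N, hN⟩ := Filter.eventually_atTop.1 ((hχ ρ).eventually_all.2 fun q _ => hρ q)
  refine ⟨2 * N, fun n hn q => ?_⟩
  by_contra! hlt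
  have hq : χ q = 1 ∧ χ (q * ρ ^ n) = 0 := by
    rcases h01 q with h | h <;> rcases h01 (q * ρ ^ n) with h' | h' <;> omega
  obtain ⟨k, hk, hchange⟩ : ∃ k < n, χ (q * ρ ^ k * ρ) ≠ χ (q * ρ ^ k) := by
    by_contra! hconst
    have hall : ∀ k ≤ n, χ (q * ρ ^ k) = 1 := fun k => by
      induction k with
      | zero => simpa using hq.1
      | succ k ih =>
        intro hk
        rw [pow_succ, ← mul_assoc, hconst k (by omega), ih (by omega)]
    have := hall n le_rfl
    omega
  rcases le_or_gt N k with hNk | hkN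
  · have h := (hN k hNk _ hchange).2
    rw [mul_assoc, ← mul_pow, mul_inv_cancel, one_pow, mul_one] at h
    omega
  · have h := (hN (n - k) (by omega) _ hchange).1
    rw [mul_assoc, ← pow_add, Nat.add_sub_cancel' hk.le] at h
    omega

lemma translationIndex_pos (hχ : IsAlmostInvariant χ) (h01 : ∀ q, χ q = 0 ∨ χ q = 1) {ρ : G}
    (hρ : ∀ q, ∀ᶠ j : ℕ in Filter.atTop, χ (q * ρ ^ j) = 1 ∧ χ (q * ρ⁻¹ ^ j) = 0) :
    0 < translationIndex χ ρ := by
  obtain ⟨N, hN⟩ := hχ.exists_apply_le_apply_mul_pow h01 hρ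
  obtain ⟨j, ⟨hj₁, hj₀⟩, hj⟩ := ((hρ 1).and (Filter.eventually_ge_atTop N)).exists
  have hpos : 0 < translationIndex χ (ρ ^ (2 * j)) := by
    refine finsum_pos (fun q => sub_nonneg.2 (hN _ (by omega) q)) ⟨1 * ρ⁻¹ ^ j, ?_⟩
      (hχ.hasFiniteSupport _)
    rw [hj₀, show 1 * ρ⁻¹ ^ j * ρ ^ (2 * j) = 1 * ρ ^ j by rw [two_mul, pow_add]; group, hj₁]
    norm_num
  rw [hχ.translationIndex_pow] at hpos
  exact pos_of_mul_pos_right hpos (Nat.cast_nonneg _)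

end IsAlmostInvariant

end TranslationIndex


/-! ## Heights of translations -/

/-- The properties of the translation subgroup of an affine Coxeter group that the theory of heights
rests on. -/
class IsTranslationSubgroup {W : Type*} [Group W] (Λ : Subgroup W) : Prop
    extends Λ.Normal, IsMulCommutative Λ, IsMulTorsionFree Λ where
  centralizer_le : Subgroup.centralizer Λ ≤ Λ

section Heights

open Filter
open scoped IsMulCommutative

variable {B W : Type*} [Group W] {M : CoxeterMatrix B} {cs : CoxeterSystem M W}
  {Λ : Subgroup W} [IsTranslationSubgroup Λ]

lemma commute_of_commute_pow {a : Λ} {x : W} {n : ℕ} (hn : n ≠ 0)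
    (h : Commute ((a ^ n : Λ) : W) x) : Commute (a : W) x := by
  have hpow : MulAut.conjNormal x a ^ n = a ^ n := by
    ext
    rw [← map_pow, MulAut.conjNormal_apply, ← h.eq, mul_inv_cancel_right]
  have hconj := congrArg Subtype.val (pow_left_injective hn hpow)
  rw [MulAut.conjNormal_apply, mul_inv_eq_iff_eq_mul] at hconj
  exact hconj.symm

omit [IsTranslationSubgroup Λ] in
lemma isReflection_inv_conj {t : W} (ht : cs.IsReflection t) (u : W) :
    cs.IsReflection (u⁻¹ * t * u) := by
  simpa using ht.conj u⁻¹

lemma notMem_of_isReflection {t : W} (ht : cs.IsReflection t) : t ∉ Λ := fun htΛ => by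
  have h : (⟨t, htΛ⟩ : Λ) ^ 2 = 1 ^ 2 := by
    ext
    simp [ht.pow_two]
  exact isReflection_ne_one ht (congrArg Subtype.val (pow_left_injective two_ne_zero h))

lemma exists_not_commute_of_notMem {x : W} (hx : x ∉ Λ) : ∃ a : Λ, ¬ Commute (a : W) x := by
  by_contra! h
  exact hx (IsTranslationSubgroup.centralizer_le
    (Subgroup.mem_centralizer_iff.2 fun a ha => h ⟨a, ha⟩))

omit [IsTranslationSubgroup Λ] in
lemma commute_mul_inv_of_conj_eq {x y t : W} (h : x⁻¹ * t * x = y⁻¹ * t * y) :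
    Commute (y * x⁻¹) t := by
  calc y * x⁻¹ * t = y * (x⁻¹ * t * x) * x⁻¹ := by group
    _ = t * (y * x⁻¹) := by rw [h]; group

lemma injective_conj_pow {a : Λ} {t : W} (ha : ¬ Commute (a : W) t) :
    Function.Injective fun j : ℕ => ((a ^ j : Λ) : W)⁻¹ * t * (a ^ j : Λ) := by
  refine .of_lt_imp_ne fun j k hjk heq => ha ?_
  refine commute_of_commute_pow (Nat.sub_ne_zero_of_lt hjk) ?_
  rw [pow_sub _ hjk.le]
  exact commute_mul_inv_of_conj_eq heq

lemma eventually_invParity_conj_pow_eq_zero (g : W) {a : Λ} {t : W} (ha : ¬ Commute (a : W) t) :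
    ∀ᶠ j : ℕ in atTop, invParity cs g (((a ^ j : Λ) : W)⁻¹ * t * (a ^ j : Λ)) = 0 := by
  rw [← Nat.cofinite_eq_atTop]
  exact (injective_conj_pow ha).tendsto_cofinite.eventually
    ((finite_setOf_invParity_ne_zero (cs := cs) g).eventually_cofinite_notMem.mono
      fun x hx => not_not.1 hx)

lemma eventually_invParity_mul_pow (q : Λ) {a : Λ} {t : W} (ha : ¬ Commute (a : W) t) :
    ∀ᶠ j : ℕ in atTop, invParity cs (q * a ^ j : Λ) t = invParity cs (a ^ j : Λ) t := by
  filter_upwards [eventually_invParity_conj_pow_eq_zero (cs := cs) q ha] with j hj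
  rw [mul_comm, Subgroup.coe_mul, invParity_mul, hj, add_zero]

lemma exists_eventually_invParity_pow_eq {a : Λ} {t : W} (ha : ¬ Commute (a : W) t) :
    ∃ ε, ∀ᶠ j : ℕ in atTop, invParity cs (a ^ j : Λ) t = ε := by
  obtain ⟨N, hN⟩ := eventually_atTop.1 (eventually_invParity_mul_pow (cs := cs) a ha)
  refine ⟨_, eventually_atTop.2 ⟨N, fun j hj => Nat.le_induction rfl (fun j hj ih => ?_) j hj⟩⟩
  rw [pow_succ', hN j hj, ih]

lemma invParity_eq_zero_of_commute {c : Λ} {t : W} (hc : Commute (c : W) t) :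
    invParity cs (c : W) t = 0 := by
  by_contra h
  obtain ⟨a, ha⟩ := exists_not_commute_of_notMem
    (notMem_of_isReflection (Λ := Λ) (isLeftInversion_of_invParity_ne_zero h).1)
  obtain ⟨j, hj⟩ := (eventually_invParity_mul_pow (cs := cs) c ha).exists
  have hct : (c : W)⁻¹ * t * c = t := by rw [mul_assoc, ← hc.eq, inv_mul_cancel_left]
  rw [Subgroup.coe_mul, invParity_mul, hct, add_eq_right] at hj
  exact h hj

lemma invParity_mul_of_commute {c : Λ} {t : W} (hc : Commute (c : W) t) (w : W) :
    invParity cs (c * w) t = invParity cs w t := by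
  rw [invParity_mul, invParity_eq_zero_of_commute hc, zero_add, mul_assoc, ← hc.eq,
    inv_mul_cancel_left]

lemma commute_conjNormal_mul_self {t : W} (ht : cs.IsReflection t) (a : Λ) :
    Commute ((MulAut.conjNormal t a * a : Λ) : W) t := by
  have h : MulAut.conjNormal t (MulAut.conjNormal t a * a) = MulAut.conjNormal t a * a := by
    rw [map_mul, ← MulAut.mul_apply, ← map_mul, ht.mul_self, map_one, MulAut.one_apply, mul_comm]
  have h' := congrArg Subtype.val h
  rw [MulAut.conjNormal_apply, mul_inv_eq_iff_eq_mul] at h'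
  exact h'.symm

-- `b = t a t⁻¹` satisfies `b a = t (b a) t⁻¹`, so that `b` and `a⁻¹` have the same limit.
lemma eventually_invParity_inv_pow {a : Λ} {t : W} (ht : cs.IsReflection t)
    (ha : ¬ Commute (a : W) t) :
    ∀ᶠ j : ℕ in atTop, invParity cs (a⁻¹ ^ j : Λ) t = invParity cs (a ^ j : Λ) t + 1 := by
  set b : Λ := MulAut.conjNormal t a with hb
  have hcomm : Commute ((b * a : Λ) : W) t := commute_conjNormal_mul_self ht a
  filter_upwards [eventually_invParity_conj_pow_eq_zero (cs := cs) t ha] with j hj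
  have hleft : invParity cs (b ^ j : Λ) t = invParity cs (a⁻¹ ^ j : Λ) t := by
    rw [show b ^ j = (b * a) ^ j * a⁻¹ ^ j by rw [← mul_pow, mul_inv_cancel_right],
      Subgroup.coe_mul, invParity_mul_of_commute (by simpa using hcomm.pow_left j)]
  have hright : invParity cs (b ^ j : Λ) t = invParity cs (a ^ j : Λ) t + 1 := by
    rw [hb, ← map_pow, MulAut.conjNormal_apply, mul_assoc, invParity_mul, invParity_self ht,
      ht.inv, ht.mul_self, one_mul, invParity_mul, hj, add_zero, add_comm]
  rw [← hleft, hright]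

/-- The indicator function of the translations of which `t` is not a left inversion, on the quotient
of `Λ` by the centralizer of `t`, through which it factors by `halfSpace_mk`. -/
def halfSpace (cs : CoxeterSystem M W) (Λ : Subgroup W)
    (t : W) (q : Λ ⧸ (Subgroup.centralizer {t}).subgroupOf Λ) : ℤ :=
  if invParity cs (q.out : W) t = 0 then 1 else 0

omit [IsTranslationSubgroup Λ] in
lemma mem_centralizer_subgroupOf {a : Λ} {t : W} :
    a ∈ (Subgroup.centralizer {t}).subgroupOf Λ ↔ Commute (a : W) t := by
  rw [Subgroup.mem_subgroupOf, Subgroup.mem_centralizer_singleton_iff]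
  rfl

lemma halfSpace_mk (t : W) (a : Λ) :
    halfSpace cs Λ t a = if invParity cs (a : W) t = 0 then 1 else 0 := by
  obtain ⟨⟨c, hc⟩, hout⟩ := QuotientGroup.mk_out_eq_mul ((Subgroup.centralizer {t}).subgroupOf Λ) a
  rw [halfSpace, hout, mul_comm, Subgroup.coe_mul,
    invParity_mul_of_commute (mem_centralizer_subgroupOf.1 hc)]

lemma isAlmostInvariant_halfSpace (t : W) : IsAlmostInvariant (halfSpace cs Λ t) := by
  intro g
  induction g using QuotientGroup.induction_on with | H g => ?_
  have hinj : Function.Injective fun q : Λ ⧸ (Subgroup.centralizer {t}).subgroupOf Λ =>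
      (q.out : W)⁻¹ * t * q.out := by
    intro p q hpq
    rw [← p.out_eq', ← q.out_eq']
    refine QuotientGroup.eq.2 (mem_centralizer_subgroupOf.2 ?_)
    rw [mul_comm]
    exact commute_mul_inv_of_conj_eq hpq
  refine ((finite_setOf_invParity_ne_zero (cs := cs) g).preimage hinj.injOn).subset ?_
  intro q hq h
  refine hq ?_
  have hqg : q * g = ((q.out * g : Λ) : Λ ⧸ (Subgroup.centralizer {t}).subgroupOf Λ) := by
    rw [QuotientGroup.mk_mul, QuotientGroup.out_eq']
  rw [hqg, halfSpace_mk, halfSpace, Subgroup.coe_mul, invParity_mul, h, add_zero]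

/-- The height of a translation over the hyperplane of a reflection `t`: up to a positive factor,
the value of the linear form whose kernel consists of the translations commuting with `t`, positive
on the side of the hyperplane that contains the fundamental alcove. -/
def height (cs : CoxeterSystem M W) (t : W) (a : Λ) : ℤ := translationIndex (halfSpace cs Λ t) a

lemma height_mul (t : W) (a b : Λ) : height cs t (a * b) = height cs t a + height cs t b := by
  simp only [height, QuotientGroup.mk_mul, (isAlmostInvariant_halfSpace t).translationIndex_mul]

variable (cs Λ) in
/-- `height` as a homomorphism. -/
def heightHom (t : W) : Λ →* Multiplicative ℤ :=
  .mk' (fun a => .ofAdd (height cs t a)) fun a b => congrArg _ (height_mul t a b)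

lemma height_eq_zero_of_commute {a : Λ} {t : W} (ha : Commute (a : W) t) : height cs t a = 0 := by
  rw [height, (QuotientGroup.eq_one_iff a).2 (mem_centralizer_subgroupOf.2 ha)]
  simp [translationIndex]

lemma height_inv (t : W) (a : Λ) : height cs t a⁻¹ = -height cs t a :=
  map_inv (heightHom cs Λ t) a

lemma height_zpow (t : W) (a : Λ) (n : ℤ) : height cs t (a ^ n) = n * height cs t a := by
  have h := congrArg Multiplicative.toAdd (map_zpow (heightHom cs Λ t) a n)
  rwa [toAdd_zpow, smul_eq_mul] at h

lemma height_prod {ι : Type*} [Fintype ι] (t : W) (f : ι → Λ) :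
    height cs t (∏ i, f i) = ∑ i, height cs t (f i) :=
  map_prod (heightHom cs Λ t) f Finset.univ

lemma height_pos_of_eventually {a : Λ} {t : W} (ht : cs.IsReflection t)
    (ha : ¬ Commute (a : W) t) (h : ∀ᶠ j : ℕ in atTop, invParity cs (a ^ j : Λ) t = 0) :
    0 < height cs t a := by
  refine (isAlmostInvariant_halfSpace t).translationIndex_pos
    (fun q => by rw [halfSpace]; split_ifs <;> simp) fun q => ?_
  induction q using QuotientGroup.induction_on with | H q => ?_
  have ha' : ¬ Commute ((a⁻¹ : Λ) : W) t := by simpa using ha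
  filter_upwards [h, eventually_invParity_mul_pow (cs := cs) q ha,
    eventually_invParity_inv_pow ht ha, eventually_invParity_mul_pow (cs := cs) q ha']
    with j h₁ h₂ h₃ h₄
  simp only [← QuotientGroup.mk_pow, ← QuotientGroup.mk_inv, ← QuotientGroup.mk_mul, halfSpace_mk,
    h₂, h₄, h₃, h₁]
  simp

lemma height_trichotomy {t : W} (ht : cs.IsReflection t) (a : Λ) :
    (height cs t a = 0 ∧ Commute (a : W) t) ∨
      (0 < height cs t a ∧ ¬ Commute (a : W) t ∧
        ∀ᶠ j : ℕ in atTop, invParity cs (a ^ j : Λ) t = 0) ∨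
      (height cs t a < 0 ∧ ¬ Commute (a : W) t ∧
        ∀ᶠ j : ℕ in atTop, invParity cs (a ^ j : Λ) t = 1) := by
  by_cases ha : Commute (a : W) t
  · exact .inl ⟨height_eq_zero_of_commute ha, ha⟩
  obtain ⟨ε, hε⟩ := exists_eventually_invParity_pow_eq (cs := cs) ha
  rcases eq_or_ne ε 0 with rfl | hne
  · exact .inr (.inl ⟨height_pos_of_eventually ht ha hε, ha, hε⟩)
  obtain rfl := eq_one_of_ne_zero_zmod_two hne
  have hinv : 0 < height cs t a⁻¹ := by
    refine height_pos_of_eventually ht (by simpa using ha) ?_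
    filter_upwards [hε, eventually_invParity_inv_pow ht ha] with j h₁ h₂
    rw [h₂, h₁, CharTwo.add_self_eq_zero]
  rw [height_inv] at hinv
  exact .inr (.inr ⟨by omega, ha, hε⟩)

lemma height_eq_zero_iff {t : W} (ht : cs.IsReflection t) {a : Λ} :
    height cs t a = 0 ↔ Commute (a : W) t := by
  refine ⟨fun h => ?_, height_eq_zero_of_commute⟩
  rcases height_trichotomy ht a with ⟨-, ha⟩ | ⟨hpos, -⟩ | ⟨hneg, -⟩
  · exact ha
  all_goals omega

lemma height_neg_iff {t : W} (ht : cs.IsReflection t) {a : Λ} :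
    height cs t a < 0 ↔ ∀ᶠ j : ℕ in atTop, invParity cs (a ^ j : Λ) t = 1 := by
  refine ⟨fun h => ?_, fun h => ?_⟩ <;> rcases height_trichotomy ht a with h' | h' | h'
  · omega
  · omega
  · exact h'.2.2
  · obtain ⟨j, hj⟩ := h.exists
    rw [invParity_eq_zero_of_commute (by simpa using h'.2.pow_left j)] at hj
    exact absurd hj zero_ne_one
  · obtain ⟨j, hj₁, hj₀⟩ := (h.and h'.2.2).exists
    rw [hj₀] at hj₁
    exact absurd hj₁ zero_ne_one
  · exact h'.1

lemma height_nonneg_iff {t : W} (ht : cs.IsReflection t) {a : Λ} :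
    0 ≤ height cs t a ↔ ∀ᶠ j : ℕ in atTop, invParity cs (a ^ j : Λ) t = 0 := by
  refine ⟨fun h => ?_, fun h => ?_⟩
  · rcases height_trichotomy ht a with h' | h' | h'
    · exact .of_forall fun j => invParity_eq_zero_of_commute (by simpa using h'.2.pow_left j)
    · exact h'.2.2
    · omega
  · by_contra! hneg
    obtain ⟨j, hj₀, hj₁⟩ := (h.and ((height_neg_iff ht).1 hneg)).exists
    rw [hj₀] at hj₁
    exact zero_ne_one hj₁

lemma eventually_invParity_conj (u : W) {a : Λ} {t : W}
    (ha : ¬ Commute (a : W) (u⁻¹ * t * u)) :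
    ∀ᶠ j : ℕ in atTop, invParity cs (MulAut.conjNormal u a ^ j : Λ) t =
      invParity cs u t + invParity cs (a ^ j : Λ) (u⁻¹ * t * u) := by
  filter_upwards [eventually_invParity_conj_pow_eq_zero (cs := cs) u⁻¹ ha] with j hj
  rw [← map_pow, MulAut.conjNormal_apply, mul_assoc, invParity_mul, invParity_mul, hj, add_zero]

omit [IsTranslationSubgroup Λ] in
lemma commute_conjNormal_iff [Λ.Normal] {u t : W} {a : Λ} :
    Commute (MulAut.conjNormal u a : W) t ↔ Commute (a : W) (u⁻¹ * t * u) := by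
  rw [MulAut.conjNormal_apply, ← Commute.conj_iff u⁻¹]
  group

lemma exists_sign_height_eq {t : W} (ht : cs.IsReflection t) {u : W} {a : Λ}
    (ha : ¬ Commute (a : W) (u⁻¹ * t * u)) :
    ∃ e : ZMod 2, SignType.sign (height cs (u⁻¹ * t * u) a) = (if e = 0 then 1 else -1) ∧
      SignType.sign (height cs t (MulAut.conjNormal u a)) =
        if invParity cs u t + e = 0 then 1 else -1 := by
  have hsign {t' : W} (ht' : cs.IsReflection t') {b : Λ} (hb : ¬ Commute (b : W) t') {e : ZMod 2}
      (he : ∀ᶠ j : ℕ in atTop, invParity cs (b ^ j : Λ) t' = e) :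
      SignType.sign (height cs t' b) = if e = 0 then 1 else -1 := by
    split_ifs with h0
    · exact sign_pos (height_pos_of_eventually ht' hb (h0 ▸ he))
    · exact sign_neg ((height_neg_iff ht').2 (eq_one_of_ne_zero_zmod_two h0 ▸ he))
  obtain ⟨e, he⟩ := exists_eventually_invParity_pow_eq (cs := cs) ha
  refine ⟨e, hsign (isReflection_inv_conj ht u) ha he, hsign ht (mt commute_conjNormal_iff.1 ha) ?_⟩
  filter_upwards [eventually_invParity_conj u ha, he] with j hj hje
  rw [hj, hje]

lemma sign_height_conj_of_eq_zero {t : W} (ht : cs.IsReflection t) {u : W}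
    (hu : invParity cs u t = 0) (a : Λ) :
    SignType.sign (height cs t (MulAut.conjNormal u a)) =
      SignType.sign (height cs (u⁻¹ * t * u) a) := by
  by_cases ha : Commute (a : W) (u⁻¹ * t * u)
  · rw [height_eq_zero_of_commute ha, height_eq_zero_of_commute (commute_conjNormal_iff.2 ha)]
  · obtain ⟨e, he, he'⟩ := exists_sign_height_eq ht ha
    rw [he, he', hu, zero_add]

lemma sign_height_conj_of_eq_one {t : W} (ht : cs.IsReflection t) {u : W}
    (hu : invParity cs u t = 1) (a : Λ) :
    SignType.sign (height cs t (MulAut.conjNormal u a)) =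
      -SignType.sign (height cs (u⁻¹ * t * u) a) := by
  by_cases ha : Commute (a : W) (u⁻¹ * t * u)
  · rw [height_eq_zero_of_commute ha, height_eq_zero_of_commute (commute_conjNormal_iff.2 ha),
      sign_zero, neg_zero]
  · obtain ⟨e, he, he'⟩ := exists_sign_height_eq ht ha
    rw [he, he', hu]
    rcases eq_or_ne e 0 with rfl | hne
    · simp
    · obtain rfl := eq_one_of_ne_zero_zmod_two hne
      simp [CharTwo.add_self_eq_zero]

end Heights

/-! ## Dominance and parallel reflections -/

section Dominance

open Filter
open scoped IsMulCommutative

variable {B W : Type*} [Group W] {M : CoxeterMatrix B} {cs : CoxeterSystem M W}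
  {Λ : Subgroup W} [IsTranslationSubgroup Λ] {I : Set W}

omit [IsTranslationSubgroup Λ] in
lemma isReflection_of_mem (hI : I ⊆ Set.range cs.simple) {s : W} (hs : s ∈ I) :
    cs.IsReflection s := by
  obtain ⟨i, rfl⟩ := hI hs
  exact cs.isReflection_simple i

lemma eventually_invParity_eq_zero_of_dominant (hI : I ⊆ Set.range cs.simple) (hfin : I.Finite)
    {a : Λ} (ha : ∀ s ∈ I, 0 ≤ height cs s a) :
    ∀ᶠ j : ℕ in atTop, ∀ t ∈ Subgroup.closure I, invParity cs (a ^ j : Λ) t = 0 := by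
  have h := hfin.eventually_all.2 fun s hs =>
    (height_nonneg_iff (isReflection_of_mem hI hs)).1 (ha s hs)
  filter_upwards [h] with j hj t ht
  exact invParity_eq_zero_of_mem_closure hI hj ht

lemma height_nonneg_of_mem_closure (hI : I ⊆ Set.range cs.simple) (hfin : I.Finite) {a : Λ}
    (ha : ∀ s ∈ I, 0 ≤ height cs s a) {t : W} (ht : cs.IsReflection t)
    (htI : t ∈ Subgroup.closure I) : 0 ≤ height cs t a :=
  (height_nonneg_iff ht).2 <|
    (eventually_invParity_eq_zero_of_dominant hI hfin ha).mono fun _ hj => hj t htI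

lemma exists_simple_height_neg [Finite B] {a : Λ} (ha : a ≠ 1) :
    ∃ s ∈ Set.range cs.simple, height cs s a < 0 := by
  by_contra! h
  obtain ⟨j, hj, hj0⟩ := ((eventually_invParity_eq_zero_of_dominant subset_rfl
    (Set.finite_range cs.simple) h).and (eventually_ne_atTop 0)).exists
  have hpow : a ^ j = 1 ^ j := by
    rw [one_pow]
    refine Subtype.ext (eq_one_of_invParity_simple_eq_zero (cs := cs) fun i => ?_)
    exact hj _ (Subgroup.subset_closure ⟨i, rfl⟩)
  exact ha (pow_left_injective hj0 hpow)

lemma height_nonneg_of_frequently {a : Λ} {t : W} (ht : cs.IsReflection t)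
    (h : ∃ᶠ j : ℕ in atTop, invParity cs (a ^ j : Λ) t = 0) : 0 ≤ height cs t a := by
  by_contra! hneg
  obtain ⟨j, hj₀, hj₁⟩ := (h.and_eventually ((height_neg_iff ht).1 hneg)).exists
  rw [hj₀] at hj₁
  exact zero_ne_one hj₁

/- For every `j` some `v j` makes `v j * a ^ j` minimal in its coset; `v` is a value taken by
infinitely many of the `v j`. -/
lemma exists_dominant_conj (hI : I ⊆ Set.range cs.simple)
    (hfin : (Subgroup.closure I : Set W).Finite) (a : Λ) :
    ∃ v ∈ Subgroup.closure I, ∀ s ∈ I, 0 ≤ height cs s (MulAut.conjNormal v a) := by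
  obtain ⟨v, hv, hfreq⟩ := hfin.frequently_exists.1 <| Frequently.of_forall (f := atTop)
    fun j : ℕ => exists_mem_closure_mul_invParity_eq_zero (cs := cs) (I := I) (a ^ j : Λ)
  refine ⟨v, hv, fun s hs => ?_⟩
  have hrefl := isReflection_of_mem hI hs
  by_cases ha : Commute (a : W) (v⁻¹ * s * v)
  · exact (height_eq_zero_of_commute (commute_conjNormal_iff.2 ha)).ge
  refine height_nonneg_of_frequently hrefl ?_
  refine (hfreq.and_eventually (eventually_invParity_conj_pow_eq_zero (cs := cs) v⁻¹ ha)).mono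
    fun j ⟨hmin, hj⟩ => ?_
  have hconj : (v * (a ^ j : Λ))⁻¹ * s * (v * (a ^ j : Λ)) =
      ((a ^ j : Λ) : W)⁻¹ * (v⁻¹ * s * v) * (a ^ j : Λ) := by group
  rw [← map_pow, MulAut.conjNormal_apply, invParity_mul, hmin s (Subgroup.subset_closure hs),
    hconj, hj, add_zero]

omit [IsTranslationSubgroup Λ] in
lemma conj_mem_closure {u t : W} (hu : u ∈ Subgroup.closure I) (ht : t ∈ Subgroup.closure I) :
    u⁻¹ * t * u ∈ Subgroup.closure I :=
  mul_mem (mul_mem (inv_mem hu) ht) hu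

lemma exists_reflection_commute_of_dominant (hI : I ⊆ Set.range cs.simple) (hfin : I.Finite)
    {a : Λ} (ha : ∀ s ∈ I, 0 ≤ height cs s a) {u : W} (hu : u ∈ Subgroup.closure I) (hu1 : u ≠ 1)
    (hua : MulAut.conjNormal u a = a) :
    ∃ t ∈ Subgroup.closure I, cs.IsReflection t ∧ Commute (a : W) t := by
  obtain ⟨s, hs, hus⟩ := exists_mem_invParity_eq_one hI hu hu1
  have hrefl := isReflection_of_mem hI hs
  have hsI := Subgroup.subset_closure (k := I) hs
  have hsign := sign_height_conj_of_eq_one hrefl hus a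
  have hnonneg := sign_nonneg_iff.2 (height_nonneg_of_mem_closure hI hfin ha
    (isReflection_inv_conj hrefl u) (conj_mem_closure hu hsI))
  have hnonpos : height cs s a ≤ 0 := by
    rw [← sign_nonpos_iff, ← hua, hsign]
    revert hnonneg
    generalize SignType.sign (height cs (u⁻¹ * s * u) a) = e
    decide +revert
  exact ⟨s, hsI, hrefl, (height_eq_zero_iff hrefl).1 (le_antisymm hnonpos (ha s hs))⟩

lemma exists_reflection_commute (hI : I ⊆ Set.range cs.simple)
    (hfin : (Subgroup.closure I : Set W).Finite) {a : Λ} {u : W}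
    (hu : u ∈ Subgroup.closure I) (hu1 : u ≠ 1) (hua : Commute (a : W) u) :
    ∃ t ∈ Subgroup.closure I, cs.IsReflection t ∧ Commute (a : W) t := by
  obtain ⟨v, hv, hdom⟩ := exists_dominant_conj hI hfin a
  have hfix : MulAut.conjNormal (v * u * v⁻¹) (MulAut.conjNormal v a) = MulAut.conjNormal v a := by
    ext
    simp only [MulAut.conjNormal_apply]
    calc v * u * v⁻¹ * (v * a * v⁻¹) * (v * u * v⁻¹)⁻¹ = v * (u * a * u⁻¹) * v⁻¹ := by group
      _ = v * a * v⁻¹ := by rw [← hua.eq, mul_inv_cancel_right]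
  obtain ⟨t, htI, ht, hat⟩ := exists_reflection_commute_of_dominant hI
    (hfin.subset Subgroup.subset_closure) hdom (mul_mem (mul_mem hv hu) (inv_mem hv))
    (by rwa [ne_eq, conj_eq_one_iff]) hfix
  exact ⟨v⁻¹ * t * v, conj_mem_closure hv htI, isReflection_inv_conj ht v,
    commute_conjNormal_iff.1 hat⟩

/- By B. H. Neumann's lemma a group is not a finite union of subgroups of infinite index. -/
lemma exists_forall_not_commute (A : Subgroup Λ) {T : Set W} (hT : T.Finite)
    (h : ∀ t ∈ T, ∃ a ∈ A, ¬ Commute (a : W) t) : ∃ a ∈ A, ∀ t ∈ T, ¬ Commute (a : W) t := by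
  by_contra! hcover
  let H (t : W) : Subgroup A := ((Subgroup.centralizer {t}).subgroupOf Λ).subgroupOf A
  have mem_H {t : W} {a : A} : a ∈ H t ↔ Commute ((a : Λ) : W) t := mem_centralizer_subgroupOf
  obtain ⟨t, ht, hindex⟩ := Subgroup.exists_finiteIndex_of_leftCoset_cover
    (s := hT.toFinset) (H := H) (g := fun _ => 1) <| by
      refine Set.eq_univ_of_forall fun a => ?_
      obtain ⟨t, ht, hat⟩ := hcover a a.2
      simpa using ⟨t, ht, mem_H.2 hat⟩
  obtain ⟨a, ha, hat⟩ := h t (hT.mem_toFinset.1 ht)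
  obtain ⟨n, hn, -, hpow⟩ := Subgroup.exists_pow_mem_of_index_ne_zero hindex.index_ne_zero
    (⟨a, ha⟩ : A)
  exact hat (commute_of_commute_pow hn.ne' (mem_H.1 hpow))

end Dominance

section Parallel

open scoped IsMulCommutative

variable {B W : Type*} [Group W] {M : CoxeterMatrix B} {cs : CoxeterSystem M W}
  {Λ : Subgroup W} [IsTranslationSubgroup Λ] {t t' : W}

lemma commute_of_mul_mem (h : t * t' ∈ Λ) {a : Λ} (ha : Commute (a : W) t) :
    Commute (a : W) t' := by
  have hmul : Commute (a : W) (t * t') := congrArg Subtype.val (mul_comm a ⟨t * t', h⟩)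
  simpa using ha.inv_right.mul_right hmul

lemma height_mul_height_comm (ht : cs.IsReflection t)
    (hker : ∀ a : Λ, Commute (a : W) t → Commute (a : W) t') (a b : Λ) :
    height cs t a * height cs t' b = height cs t b * height cs t' a := by
  have hzero : height cs t (a ^ height cs t b * b ^ (-height cs t a)) = 0 := by
    rw [height_mul, height_zpow, height_zpow]
    ring
  have hzero' := height_eq_zero_of_commute (cs := cs) (hker _ ((height_eq_zero_iff ht).1 hzero))
  rw [height_mul, height_zpow, height_zpow] at hzero'
  linarith

lemma commute_of_conjNormal_eq_mul [Λ.FiniteIndex] {x : W} {a d : Λ}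
    (hd : Commute (d : W) x) (h : MulAut.conjNormal x a = d * a) : Commute (a : W) x := by
  have hfix : MulAut.conjNormal x d = d := by
    ext
    rw [MulAut.conjNormal_apply, ← hd.eq, mul_inv_cancel_right]
  have hiter (n : ℕ) : MulAut.conjNormal (x ^ n) a = d ^ n * a := by
    induction n with
    | zero => simp
    | succ n ih =>
      calc MulAut.conjNormal (x ^ (n + 1)) a
          = MulAut.conjNormal x (MulAut.conjNormal (x ^ n) a) := by
            rw [pow_succ', map_mul, MulAut.mul_apply]
        _ = d ^ n * (d * a) := by rw [ih, map_mul, map_pow, hfix, h]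
        _ = d ^ (n + 1) * a := by rw [pow_succ, mul_assoc]
  obtain ⟨n, hn, -, hxn⟩ := Subgroup.exists_pow_mem_of_index_ne_zero
    (Subgroup.FiniteIndex.index_ne_zero (H := Λ)) x
  have hdn : d ^ n = 1 ^ n := by
    have hcomm : Commute (x ^ n) a := congrArg Subtype.val (mul_comm (⟨x ^ n, hxn⟩ : Λ) a)
    rw [one_pow, ← mul_eq_right (b := a), ← hiter]
    ext
    rw [MulAut.conjNormal_apply, hcomm.eq, mul_inv_cancel_right]
  rw [pow_left_injective hn.ne' hdn, one_mul] at h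
  have hconj := congrArg Subtype.val h
  rw [MulAut.conjNormal_apply, mul_inv_eq_iff_eq_mul] at hconj
  exact hconj.symm

lemma height_conj_of_commute_imp {r : W} (hr : cs.IsReflection r)
    (hker : ∀ a : Λ, Commute (a : W) r → Commute (a : W) t) (a : Λ) :
    height cs t (MulAut.conjNormal r a) = -height cs t a := by
  have h := height_eq_zero_of_commute (cs := cs) (hker _ (commute_conjNormal_mul_self hr a))
  rw [height_mul] at h
  omega

lemma mul_mem_of_commute_imp [Λ.FiniteIndex] (ht : cs.IsReflection t) (ht' : cs.IsReflection t')
    (hker : ∀ a : Λ, Commute (a : W) t → Commute (a : W) t') : t * t' ∈ Λ := by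
  obtain ⟨c, hc⟩ := exists_not_commute_of_notMem (notMem_of_isReflection (Λ := Λ) ht')
  have hker' (a : Λ) (ha : Commute (a : W) t') : Commute (a : W) t := by
    have h := height_mul_height_comm ht hker a c
    rw [height_eq_zero_of_commute ha, mul_zero, mul_eq_zero, height_eq_zero_iff ht,
      height_eq_zero_iff ht'] at h
    exact h.resolve_right hc
  refine IsTranslationSubgroup.centralizer_le (Subgroup.mem_centralizer_iff.2 fun a ha => ?_)
  set d : Λ := MulAut.conjNormal (t * t') ⟨a, ha⟩ * ⟨a, ha⟩⁻¹ with hd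
  have hdt : Commute (d : W) t := by
    rw [← height_eq_zero_iff ht, hd, height_mul, height_inv, map_mul, MulAut.mul_apply,
      height_conj_of_commute_imp ht fun _ => id, height_conj_of_commute_imp ht' hker']
    ring
  exact commute_of_conjNormal_eq_mul (a := ⟨a, ha⟩) (hdt.mul_right (hker d hdt)) (by simp [hd])

lemma exists_parallel_reflection [Λ.FiniteIndex] {I : Set W} (hI : I ⊆ Set.range cs.simple)
    (hfin : (Subgroup.closure I : Set W).Finite) {s u : W} (hs : cs.IsReflection s)
    (hu : u ∈ Subgroup.closure I) (hsu : s * u⁻¹ ∈ Λ) :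
    ∃ t ∈ Subgroup.closure I, cs.IsReflection t ∧ s * t ∈ Λ := by
  by_contra! hcon
  obtain ⟨a, ha, hreg⟩ := exists_forall_not_commute ((Subgroup.centralizer {s}).subgroupOf Λ)
    (T := {t | t ∈ Subgroup.closure I ∧ cs.IsReflection t}) (hfin.subset fun t h => h.1) <| by
      rintro t ⟨htI, ht⟩
      by_contra! h
      exact hcon t htI ht
        (mul_mem_of_commute_imp hs ht fun a ha => h a (mem_centralizer_subgroupOf.2 ha))
  have hau : Commute (a : W) u := by
    simpa using (commute_of_mul_mem hsu (mem_centralizer_subgroupOf.1 ha)).inv_right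
  have hu1 : u ≠ 1 := by
    rintro rfl
    exact notMem_of_isReflection hs (by simpa using hsu)
  obtain ⟨t, htI, ht, hat⟩ := exists_reflection_commute hI hfin hu hu1 hau
  exact hreg t ⟨htI, ht⟩ hat

end Parallel

/-! ## Hyperspecial vertices -/

section Hyperspecial

open scoped IsMulCommutative

variable {B W : Type*} [Group W] {M : CoxeterMatrix B} {cs : CoxeterSystem M W}
  {Λ : Subgroup W} [IsTranslationSubgroup Λ] {I : Set W} {s s₀ s₁ t t' w : W}

lemma exists_regular_dominant (cs : CoxeterSystem M W) (Λ : Subgroup W) [IsTranslationSubgroup Λ]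
    (hI : I ⊆ Set.range cs.simple) (hfin : (Subgroup.closure I : Set W).Finite) :
    ∃ σ : Λ, ∀ t ∈ Subgroup.closure I, cs.IsReflection t → 0 < height cs t σ := by
  obtain ⟨a, -, ha⟩ := exists_forall_not_commute (⊤ : Subgroup Λ)
    (T := {t | t ∈ Subgroup.closure I ∧ cs.IsReflection t}) (hfin.subset fun t h => h.1) fun t h =>
      (exists_not_commute_of_notMem (notMem_of_isReflection h.2)).imp fun a ha => ⟨trivial, ha⟩
  obtain ⟨v, hv, hdom⟩ := exists_dominant_conj hI hfin a
  refine ⟨MulAut.conjNormal v a, fun t htI ht => lt_of_le_of_ne' ?_ ?_⟩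
  · exact height_nonneg_of_mem_closure hI (hfin.subset Subgroup.subset_closure) hdom ht htI
  · rw [ne_eq, height_eq_zero_iff ht, commute_conjNormal_iff]
    exact ha _ ⟨conj_mem_closure hv htI, isReflection_inv_conj ht v⟩

lemma exists_average (cs : CoxeterSystem M W) (H : Subgroup W) [Finite H] (σ : Λ) :
    ∃ τ : Λ, (∀ k ∈ H, MulAut.conjNormal k τ = τ) ∧
      ∀ t, (∀ u ∈ H, 0 < height cs t (MulAut.conjNormal u σ)) → 0 < height cs t τ := by
  have := Fintype.ofFinite H
  refine ⟨∏ u : H, MulAut.conjNormal (u : W) σ, fun k hk => ?_, fun t ht => ?_⟩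
  · rw [map_prod]
    refine Fintype.prod_equiv (Equiv.mulLeft ⟨k, hk⟩) _ _ fun u => ?_
    rw [Equiv.coe_mulLeft, Subgroup.coe_mul, map_mul, MulAut.mul_apply]
  · rw [height_prod]
    exact Finset.sum_pos (fun u _ => ht u u.2) Finset.univ_nonempty

lemma exists_fixed_height_pos (Λ : Subgroup W) [IsTranslationSubgroup Λ]
    (hI : I ⊆ Set.range cs.simple) (hfin : (Subgroup.closure I : Set W).Finite) (hs : s ∈ I) :
    ∃ τ : Λ, (∀ k ∈ Subgroup.closure (I \ {s}), MulAut.conjNormal k τ = τ) ∧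
      0 < height cs s τ := by
  have hle : Subgroup.closure (I \ {s}) ≤ Subgroup.closure I :=
    Subgroup.closure_mono Set.sdiff_subset
  have : Finite (Subgroup.closure (I \ {s})) := hfin.subset hle
  have hrefl := isReflection_of_mem hI hs
  obtain ⟨σ, hσ⟩ := exists_regular_dominant cs Λ hI hfin
  obtain ⟨τ, hfix, hpos⟩ := exists_average cs (Subgroup.closure (I \ {s})) σ
  refine ⟨τ, hfix, hpos s fun u hu => ?_⟩
  have hus : invParity cs u s = 0 := by
    by_contra h
    have hmem := mem_closure_of_invParity_ne_zero (Set.sdiff_subset.trans hI) hu h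
    exact (mem_of_simple_mem_closure (Set.sdiff_subset.trans hI) (hI hs) hmem).2 rfl
  rw [← sign_eq_one_iff, sign_height_conj_of_eq_zero hrefl hus, sign_eq_one_iff]
  exact hσ _ (conj_mem_closure (hle hu) (Subgroup.subset_closure hs))
    (isReflection_inv_conj hrefl u)

lemma commute_of_conjNormal_eq {a : Λ} (h : MulAut.conjNormal s a = a) : Commute (a : W) s := by
  have h' := congrArg Subtype.val h
  rw [MulAut.conjNormal_apply, mul_inv_eq_iff_eq_mul] at h'
  exact h'.symm

lemma exists_fixed_height_pos_neg [Finite B] (Λ : Subgroup W) [IsTranslationSubgroup Λ]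
    (hfin : (Subgroup.closure (Set.range cs.simple \ {s₀}) : Set W).Finite)
    (hs₁ : s₁ ∈ Set.range cs.simple \ {s₀}) :
    ∃ τ : Λ, (∀ k ∈ Subgroup.closure (Set.range cs.simple \ {s₀, s₁}),
      MulAut.conjNormal k τ = τ) ∧
      (∀ s ∈ Set.range cs.simple \ {s₀}, 0 ≤ height cs s τ) ∧ height cs s₀ τ < 0 := by
  obtain ⟨τ, hfix, hpos⟩ := exists_fixed_height_pos Λ Set.sdiff_subset hfin hs₁
  have hnonneg (s) (hs : s ∈ Set.range cs.simple \ {s₀}) : 0 ≤ height cs s τ := by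
    by_cases hs1 : s = s₁
    · exact hs1 ▸ hpos.le
    · exact (height_eq_zero_of_commute
        (commute_of_conjNormal_eq (hfix s (Subgroup.subset_closure ⟨hs, hs1⟩)))).ge
  have hτ1 : τ ≠ 1 := by
    rintro rfl
    simp [height_eq_zero_of_commute] at hpos
  obtain ⟨s, hs, hneg⟩ := exists_simple_height_neg (cs := cs) hτ1
  have hs0 : s = s₀ := by
    by_contra hne
    exact (hnonneg s ⟨hs, hne⟩).not_gt hneg
  refine ⟨τ, fun k hk => hfix k ?_, hnonneg, hs0 ▸ hneg⟩
  rwa [Set.insert_eq, ← Set.sdiff_sdiff] at hk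

lemma exists_height_pos_of_ne_height_neg (Λ : Subgroup W) [IsTranslationSubgroup Λ]
    (hI : I ⊆ Set.range cs.simple) (hfin : (Subgroup.closure I : Set W).Finite) (hs : s ∈ I) :
    ∃ ρ : Λ, (∀ t ∈ Subgroup.closure I, cs.IsReflection t → t ≠ s → 0 < height cs t ρ) ∧
      height cs s ρ < 0 := by
  obtain ⟨σ, hσ⟩ := exists_regular_dominant cs Λ hI hfin
  have hrefl := isReflection_of_mem hI hs
  have hsI := Subgroup.subset_closure (k := I) hs
  refine ⟨MulAut.conjNormal s σ, fun t htI ht hts => ?_, ?_⟩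
  · have hst : invParity cs s t = 0 := by
      obtain ⟨i, rfl⟩ := hI hs
      rw [invParity_simple, if_neg hts]
    rw [← sign_eq_one_iff, sign_height_conj_of_eq_zero ht hst, sign_eq_one_iff]
    exact hσ _ (conj_mem_closure hsI htI) (isReflection_inv_conj ht s)
  · rw [← sign_eq_neg_one_iff, sign_height_conj_of_eq_one hrefl (invParity_self hrefl), neg_inj,
      sign_eq_one_iff]
    exact hσ _ (conj_mem_closure hsI hsI) (isReflection_inv_conj hrefl s)

lemma height_eq_zero_iff_of_mul_mem (ht : cs.IsReflection t) (ht' : cs.IsReflection t')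
    (h : t * t' ∈ Λ) {a : Λ} : height cs t a = 0 ↔ height cs t' a = 0 := by
  have h' : t' * t ∈ Λ := by simpa [ht.inv, ht'.inv] using inv_mem h
  rw [height_eq_zero_iff ht, height_eq_zero_iff ht']
  exact ⟨commute_of_mul_mem h, commute_of_mul_mem h'⟩

lemma height_mul_height_neg_of_mul_mem (ht : cs.IsReflection t) (ht' : cs.IsReflection t')
    (h : t * t' ∈ Λ) {a b : Λ} (hpos : 0 < height cs t a) (hneg : height cs t b < 0) :
    height cs t' a * height cs t' b < 0 := by
  have hprop := height_mul_height_comm ht (fun _ => commute_of_mul_mem h) a b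
  have ha : height cs t' a ≠ 0 := (height_eq_zero_iff_of_mul_mem ht ht' h).not.1 hpos.ne'
  refine neg_of_mul_neg_right ?_ hpos.le
  calc height cs t a * (height cs t' a * height cs t' b)
    _ = height cs t b * (height cs t' a * height cs t' a) := by
      linear_combination height cs t' a * hprop
    _ < 0 := mul_neg_of_neg_of_pos hneg (mul_self_pos.2 ha)

lemma height_mul_height_nonneg_of_dominant_conj (hI : I ⊆ Set.range cs.simple) (hfin : I.Finite)
    (hw : w ∈ Subgroup.closure I) (ht : cs.IsReflection t) (htI : t ∈ Subgroup.closure I)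
    {a b : Λ} (ha : ∀ s ∈ I, 0 ≤ height cs s (MulAut.conjNormal w a))
    (hb : ∀ s ∈ I, 0 ≤ height cs s (MulAut.conjNormal w b)) :
    0 ≤ height cs t a * height cs t b := by
  have hdom {c : Λ} (hc : ∀ s ∈ I, 0 ≤ height cs s (MulAut.conjNormal w c)) :=
    height_nonneg_of_mem_closure hI hfin hc (isReflection_inv_conj ht w⁻¹)
      (conj_mem_closure (inv_mem hw) htI)
  have hconj (c : Λ) : MulAut.conjNormal w⁻¹ (MulAut.conjNormal w c) = c := by
    rw [← MulAut.mul_apply, ← map_mul, inv_mul_cancel, map_one, MulAut.one_apply]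
  by_cases hη : invParity cs w⁻¹ t = 0
  · have hnonneg {c : Λ} (hc : ∀ s ∈ I, 0 ≤ height cs s (MulAut.conjNormal w c)) :
        0 ≤ height cs t c := by
      rw [← hconj c, ← sign_nonneg_iff, sign_height_conj_of_eq_zero ht hη, sign_nonneg_iff]
      exact hdom hc
    exact mul_nonneg (hnonneg ha) (hnonneg hb)
  · have hnonpos {c : Λ} (hc : ∀ s ∈ I, 0 ≤ height cs s (MulAut.conjNormal w c)) :
        height cs t c ≤ 0 := by
      rw [← hconj c, ← sign_nonpos_iff,
        sign_height_conj_of_eq_one ht (eq_one_of_ne_zero_zmod_two hη), ← Left.sign_neg,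
        sign_nonpos_iff, neg_nonpos]
      exact hdom hc
    exact mul_nonneg_of_nonpos_of_nonpos (hnonpos ha) (hnonpos hb)

lemma height_conj_nonpos_of_nonneg [Finite B] (hs₀ : s₀ ∈ Set.range cs.simple)
    (hfin : (Subgroup.closure (Set.range cs.simple \ {s₀}) : Set W).Finite)
    (hs₁ : s₁ ∈ Set.range cs.simple \ {s₀})
    (hw : w ∈ Subgroup.closure (Set.range cs.simple \ {s₀, s₁})) (ht : cs.IsReflection t)
    (htJ : t ∈ Subgroup.closure (Set.range cs.simple \ {s₀})) (h : w * s₀ * w⁻¹ * t ∈ Λ) {a : Λ}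
    (ha : 0 ≤ height cs t a) : height cs (w * s₀ * w⁻¹) a ≤ 0 := by
  have hrefl := (isReflection_of_mem subset_rfl hs₀).conj w
  obtain ⟨τ, hfix, hnonneg, hneg⟩ := exists_fixed_height_pos_neg Λ hfin hs₁
  have hη : invParity cs w (w * s₀ * w⁻¹) = 0 := by
    by_contra hη
    have hmem := mem_closure_of_invParity_ne_zero Set.sdiff_subset hw hη
    rw [mul_mem_cancel_right (inv_mem hw), mul_mem_cancel_left hw] at hmem
    exact (mem_of_simple_mem_closure Set.sdiff_subset hs₀ hmem).2 (Set.mem_insert _ _)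
  have hzτ : height cs (w * s₀ * w⁻¹) τ < 0 := by
    rw [← hfix w hw, ← sign_eq_neg_one_iff, sign_height_conj_of_eq_zero hrefl hη,
      sign_eq_neg_one_iff]
    simpa only [mul_assoc, inv_mul_cancel_left, inv_mul_cancel, mul_one] using hneg
  have htτ : 0 ≤ height cs t τ :=
    height_nonneg_of_mem_closure Set.sdiff_subset (hfin.subset Subgroup.subset_closure) hnonneg
      ht htJ
  by_contra! hza
  have hlt := height_mul_height_neg_of_mul_mem hrefl ht h hza hzτ
  exact hlt.not_ge (mul_nonneg ha htτ)

lemma IsLongest.height_conj_nonneg (hw : IsLongest cs (Set.range cs.simple \ {s₀, s₁}) w)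
    (hs₀ : s₀ ∈ Set.range cs.simple) {a : Λ}
    (ha : ∀ s ∈ Set.range cs.simple \ {s₀, s₁}, height cs s a ≤ 0)
    (ha₀ : 0 ≤ height cs (w * s₀ * w⁻¹) a) (hs : s ∈ Set.range cs.simple \ {s₁}) :
    0 ≤ height cs s (MulAut.conjNormal w a) := by
  have hrefl := isReflection_of_mem Set.sdiff_subset hs
  have hinv := hw.inv_eq Set.sdiff_subset
  by_cases hs0 : s = s₀
  · subst hs0
    have hη : invParity cs w s = 0 := by
      by_contra hη
      have hmem := mem_closure_of_invParity_ne_zero Set.sdiff_subset hw.1 hη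
      exact (mem_of_simple_mem_closure Set.sdiff_subset hs₀ hmem).2 (Set.mem_insert _ _)
    rw [← sign_nonneg_iff, sign_height_conj_of_eq_zero hrefl hη, sign_nonneg_iff]
    rwa [hinv] at ha₀ ⊢
  · have hsK : s ∈ Set.range cs.simple \ {s₀, s₁} := ⟨hs.1, by simpa using ⟨hs0, hs.2⟩⟩
    rw [← sign_nonneg_iff, sign_height_conj_of_eq_one hrefl
      (hw.invParity_eq_one hrefl (Subgroup.subset_closure hsK)), ← Left.sign_neg,
      sign_nonneg_iff, neg_nonneg]
    have hconj := ha _ (hw.conj_mem Set.sdiff_subset hsK)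
    rwa [hinv] at hconj ⊢

/-- A vertex `s` is hyperspecial when the parabolic subgroup generated by the other vertices maps
isomorphically onto `W ⧸ Λ`; since `Λ` is normal, this says that it is a complement of `Λ`. -/
def IsHyperspecial (cs : CoxeterSystem M W) (Λ : Subgroup W) (s : W) : Prop :=
  Λ.IsComplement' (Subgroup.closure (Set.range cs.simple \ {s}))

omit [IsTranslationSubgroup Λ] in
lemma isHyperspecial_iff_existsUnique : IsHyperspecial cs Λ s ↔
    ∀ x, ∃! u, u ∈ Subgroup.closure (Set.range cs.simple \ {s}) ∧ x * u⁻¹ ∈ Λ := by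
  simp only [IsHyperspecial, Subgroup.isComplement_iff_existsUnique_mul_inv_mem, ExistsUnique,
    Subtype.exists, Subtype.forall, Subtype.mk.injEq, SetLike.mem_coe, and_assoc, and_imp,
    exists_prop]

omit [IsTranslationSubgroup Λ] in
lemma IsHyperspecial.finite_closure [Λ.FiniteIndex] (hs : IsHyperspecial cs Λ s) :
    (Subgroup.closure (Set.range cs.simple \ {s}) : Set W).Finite :=
  Subgroup.IsComplement.finite_right hs

lemma IsHyperspecial.exists_parallel_reflection [Λ.FiniteIndex] (hs : IsHyperspecial cs Λ s)
    (ht : cs.IsReflection t) :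
    ∃ t' ∈ Subgroup.closure (Set.range cs.simple \ {s}), cs.IsReflection t' ∧ t * t' ∈ Λ := by
  obtain ⟨u, ⟨hu, htu⟩, -⟩ := isHyperspecial_iff_existsUnique.1 hs t
  exact LY.exists_parallel_reflection Set.sdiff_subset hs.finite_closure ht hu htu

lemma IsLongest.height_conj_inv_nonneg [Finite B] (hs₀ : s₀ ∈ Set.range cs.simple)
    (hfin : (Subgroup.closure (Set.range cs.simple \ {s₀}) : Set W).Finite)
    (hs₁ : s₁ ∈ Set.range cs.simple \ {s₀})
    (hw : IsLongest cs (Set.range cs.simple \ {s₀, s₁}) w) (ht : cs.IsReflection t)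
    (htJ : t ∈ Subgroup.closure (Set.range cs.simple \ {s₀})) (h : w * s₀ * w⁻¹ * t ∈ Λ)
    (hts : t ≠ s₁) {a : Λ} (ha : ∀ t ∈ Subgroup.closure (Set.range cs.simple \ {s₀}),
      cs.IsReflection t → t ≠ s₁ → 0 ≤ height cs t a) (hs : s ∈ Set.range cs.simple \ {s₁}) :
    0 ≤ height cs s (MulAut.conjNormal w a⁻¹) := by
  refine hw.height_conj_nonneg hs₀ (fun k hk => ?_) ?_ hs <;> rw [height_inv]
  · rw [Set.insert_eq, ← Set.sdiff_sdiff] at hk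
    exact neg_nonpos.2 (ha k (Subgroup.subset_closure hk.1)
      (isReflection_of_mem Set.sdiff_subset hk.1) hk.2)
  · exact neg_nonneg.2
      (height_conj_nonpos_of_nonneg hs₀ hfin hs₁ hw.1 ht htJ h (ha t htJ ht hts))

lemma IsLongest.mul_conj_mem [Finite B] [Λ.FiniteIndex] (hs₀ : s₀ ∈ Set.range cs.simple)
    (hh₀ : IsHyperspecial cs Λ s₀) (hs₁ : s₁ ∈ Set.range cs.simple)
    (hh₁ : IsHyperspecial cs Λ s₁) (hne : s₁ ≠ s₀)
    (hw : IsLongest cs (Set.range cs.simple \ {s₀, s₁}) w) : s₀ * (w * s₁ * w⁻¹) ∈ Λ := by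
  have hfin₀ := hh₀.finite_closure
  have hs₁J : s₁ ∈ Set.range cs.simple \ {s₀} := ⟨hs₁, hne⟩
  have hrefl₁ := isReflection_of_mem subset_rfl hs₁
  obtain ⟨t, htJ, ht, hzt⟩ :=
    hh₀.exists_parallel_reflection ((isReflection_of_mem subset_rfl hs₀).conj w)
  suffices hts : t = s₁ by
    have hconj := Subgroup.Normal.conj_mem inferInstance _ hzt w⁻¹
    rwa [hts, inv_inv, show w⁻¹ * (w * s₀ * w⁻¹ * s₁) * w = s₀ * (w⁻¹ * s₁ * w⁻¹⁻¹) by group,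
      hw.inv_eq Set.sdiff_subset] at hconj
  by_contra hts
  obtain ⟨σ, hσ⟩ := exists_regular_dominant cs Λ Set.sdiff_subset hfin₀
  obtain ⟨ρ, hρ, hρneg⟩ := exists_height_pos_of_ne_height_neg Λ Set.sdiff_subset hfin₀ hs₁J
  obtain ⟨t₁, ht₁J, ht₁, hst₁⟩ := hh₁.exists_parallel_reflection hrefl₁
  have hnonneg : 0 ≤ height cs t₁ σ⁻¹ * height cs t₁ ρ⁻¹ :=
    height_mul_height_nonneg_of_dominant_conj
      Set.sdiff_subset (hh₁.finite_closure.subset Subgroup.subset_closure)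
      (Subgroup.closure_mono (Set.sdiff_subset_sdiff_right (by simp)) hw.1) ht₁ ht₁J
      (fun _ => hw.height_conj_inv_nonneg hs₀ hfin₀ hs₁J ht htJ hzt hts
        fun t htJ ht _ => (hσ t htJ ht).le)
      (fun _ => hw.height_conj_inv_nonneg hs₀ hfin₀ hs₁J ht htJ hzt hts
        fun t htJ ht hts => (hρ t htJ ht hts).le)
  rw [height_inv, height_inv, neg_mul_neg] at hnonneg
  exact hnonneg.not_gt (height_mul_height_neg_of_mul_mem hrefl₁ ht₁ hst₁
    (hσ s₁ (Subgroup.subset_closure hs₁J) hrefl₁) hρneg)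

end Hyperspecial

section Complement

variable {G : Type*} [Group G] {Λ H H' : Subgroup G} [Λ.Normal]

lemma exists_mulEquiv_of_isComplement' (h : Λ.IsComplement' H) (h' : Λ.IsComplement' H') :
    ∃ e : H ≃* H', ∀ u : H, (u * (e u : G)⁻¹ : G) ∈ Λ := by
  refine ⟨h.symm.QuotientMulEquiv.symm.trans h'.symm.QuotientMulEquiv, fun u => ?_⟩
  have hu := h'.symm.inv_toLeftFun_mul_mem (u : G)
  exact (Subgroup.Normal.mem_comm_iff inferInstance).1 hu

omit [Λ.Normal] in
lemma eq_of_mul_inv_mem_of_disjoint (h : Disjoint Λ H) {u v : G} (hu : u ∈ H) (hv : v ∈ H)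
    (huv : u * v⁻¹ ∈ Λ) : u = v :=
  mul_inv_eq_one.1 (Subgroup.disjoint_def.1 h huv (H.mul_mem hu (H.inv_mem hv)))

lemma exists_mulAut_of_isComplement' [IsMulCommutative Λ] (h : Λ.IsComplement' H)
    (h' : Λ.IsComplement' H') :
    ∃ φ : MulAut G, (∀ a ∈ Λ, φ a = a) ∧
      ∀ u ∈ H, ∀ v ∈ H', u * v⁻¹ ∈ Λ → φ u = v := by
  obtain ⟨e, he⟩ := exists_mulEquiv_of_isComplement' h h'
  let f := SemidirectProduct.mulEquivSubgroup h
  let f' := SemidirectProduct.mulEquivSubgroup h'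
  have hfl (a : Λ) : f (SemidirectProduct.inl a) = a := by simp [f]
  have hfr (u : H) : f (SemidirectProduct.inr u) = u := by simp [f]
  have hfl' (a : Λ) : f' (SemidirectProduct.inl a) = a := by simp [f']
  have hfr' (u : H') : f' (SemidirectProduct.inr u) = u := by simp [f']
  -- `u` and `e u` act in the same way on `Λ`, because they differ by an element of `Λ`.
  have hact (u : H) (a : Λ) : (u * a * (u : G)⁻¹ : G) = e u * a * (e u : G)⁻¹ := by
    have hc := setLike_mul_comm (he u)
      (Subgroup.Normal.conj_mem inferInstance _ a.2 (e u))
    rw [← mul_inv_eq_iff_eq_mul] at hc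
    rw [← hc]
    group
  let ψ := SemidirectProduct.congr (MulEquiv.refl Λ) e
    (φ₁ := (Λ.normalizerMonoidHom).comp (Subgroup.inclusion (Λ.normalizer_eq_top ▸ le_top)))
    (φ₂ := (Λ.normalizerMonoidHom).comp (Subgroup.inclusion (Λ.normalizer_eq_top ▸ le_top)))
    fun u => by ext a; exact hact u a
  refine ⟨(f.symm.trans ψ).trans f', fun a ha => ?_, fun u hu v hv huv => ?_⟩
  · rw [MulEquiv.trans_apply, MulEquiv.trans_apply, f.symm_apply_eq.2 (hfl ⟨a, ha⟩).symm]
    rw [show ψ (SemidirectProduct.inl ⟨a, ha⟩) = SemidirectProduct.inl ⟨a, ha⟩ from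
      SemidirectProduct.ext rfl (map_one e), hfl']
  · rw [MulEquiv.trans_apply, MulEquiv.trans_apply, f.symm_apply_eq.2 (hfr ⟨u, hu⟩).symm]
    rw [show ψ (SemidirectProduct.inr ⟨u, hu⟩) = SemidirectProduct.inr (e ⟨u, hu⟩) from rfl, hfr']
    refine eq_of_mul_inv_mem_of_disjoint h'.disjoint (e ⟨u, hu⟩).2 hv ?_
    simpa only [mul_inv_rev, inv_inv, inv_mul_cancel_left, mul_assoc] using
      Λ.mul_mem (Λ.inv_mem (he ⟨u, hu⟩)) huv

end Complement

section Swap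

variable {B W : Type*} [Group W] {M : CoxeterMatrix B} {cs : CoxeterSystem M W} {Λ : Subgroup W}
  [IsTranslationSubgroup Λ] {s₀ s₁ w : W}

lemma IsLongest.exists_mulAut_swap [Finite B] [Λ.FiniteIndex] (hs₀ : s₀ ∈ Set.range cs.simple)
    (hh₀ : IsHyperspecial cs Λ s₀) (hs₁ : s₁ ∈ Set.range cs.simple)
    (hh₁ : IsHyperspecial cs Λ s₁) (hne : s₁ ≠ s₀)
    (hw : IsLongest cs (Set.range cs.simple \ {s₀, s₁}) w) :
    ∃ ψ : MulAut W, (∀ a ∈ Λ, ψ a = w * a * w⁻¹) ∧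
      (∀ k ∈ Set.range cs.simple \ {s₀, s₁}, ψ k = w * k * w⁻¹) ∧
      ψ s₀ = s₁ ∧ ψ s₁ = w * s₁ * w⁻¹ * s₀ * (w * s₁ * w⁻¹) := by
  have hμ := hw.mul_conj_mem hs₀ hh₀ hs₁ hh₁ hne
  have hr := ((isReflection_of_mem subset_rfl hs₁).conj w).inv
  set r := w * s₁ * w⁻¹ with hr_def
  have hK₀ : Subgroup.closure (Set.range cs.simple \ {s₀, s₁}) ≤
      Subgroup.closure (Set.range cs.simple \ {s₀}) :=
    Subgroup.closure_mono (Set.sdiff_subset_sdiff_right (by simp))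
  have hK₁ : Subgroup.closure (Set.range cs.simple \ {s₀, s₁}) ≤
      Subgroup.closure (Set.range cs.simple \ {s₁}) :=
    Subgroup.closure_mono (Set.sdiff_subset_sdiff_right (by simp))
  have hrJ : r ∈ Subgroup.closure (Set.range cs.simple \ {s₀}) :=
    Subgroup.mul_mem _ (Subgroup.mul_mem _ (hK₀ hw.1) (Subgroup.subset_closure ⟨hs₁, hne⟩))
      (Subgroup.inv_mem _ (hK₀ hw.1))
  obtain ⟨φ, hφΛ, hφ⟩ := exists_mulAut_of_isComplement' hh₁ hh₀
  have hφK (k) (hk : k ∈ Subgroup.closure (Set.range cs.simple \ {s₀, s₁})) : φ k = k :=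
    hφ k (hK₁ hk) k (hK₀ hk) (by simp [Λ.one_mem])
  have hφ₀ : φ s₀ = r :=
    hφ s₀ (Subgroup.subset_closure ⟨hs₀, hne.symm⟩) r hrJ (by rwa [hr])
  have hφ₁ : φ s₁ = w⁻¹ * (r * s₀ * r) * w := by
    have hs₁_eq : s₁ = w⁻¹ * (s₀⁻¹ * (s₀ * r)) * w := by rw [hr_def]; group
    rw [hs₁_eq, map_mul, map_mul, map_mul, map_inv, map_inv, hφK w hw.1, hφ₀, hφΛ _ hμ, hr,
      mul_assoc r]
  refine ⟨MulAut.conj w * φ, fun a ha => ?_, fun k hk => ?_, ?_, ?_⟩ <;>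
    rw [MulAut.mul_apply, MulAut.conj_apply]
  · rw [hφΛ a ha]
  · rw [hφK k (Subgroup.subset_closure hk)]
  · rw [hφ₀, hr_def]
    nth_rw 1 [← hw.inv_eq Set.sdiff_subset]
    nth_rw 3 [← hw.inv_eq Set.sdiff_subset]
    group
  · rw [hφ₁]
    group

end Swap

/-! ## Automorphisms -/

section Rigidity

variable {B W : Type*} [Group W] {M : CoxeterMatrix B} {cs : CoxeterSystem M W} {Λ : Subgroup W}
  {s w : W} {b : MulAut W}

lemma invParity_map (hb : Set.MapsTo b (Set.range cs.simple) (Set.range cs.simple)) (x t : W) :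
    invParity cs (b x) (b t) = invParity cs x t := by
  induction x using cs.simple_induction generalizing t with
  | one => rw [map_one, invParity_one, invParity_one]
  | simple i =>
    obtain ⟨j, hj⟩ := hb ⟨i, rfl⟩
    simp only [← hj, invParity_simple]
    simp only [hj, b.injective.eq_iff]
  | mul x y hx hy =>
    rw [map_mul, invParity_mul, invParity_mul, hx, ← map_inv, ← map_mul, ← map_mul, hy]

lemma invParity_inv_conj (hw : Set.MapsTo (MulAut.conj w) (Set.range cs.simple)
    (Set.range cs.simple)) (x t : W) :
    invParity cs w⁻¹ (x⁻¹ * t * x) = invParity cs w⁻¹ t := by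
  have h := invParity_conj_mul cs w x t
  rw [show w * x = MulAut.conj w x * w by simp, ← MulAut.conj_apply, invParity_mul,
    invParity_map hw, add_comm, add_left_inj, ← map_inv, ← map_mul, ← map_mul] at h
  rwa [invParity_inv, invParity_inv]

lemma eq_one_of_mapsTo_conj [IsTranslationSubgroup Λ]
    (hw : Set.MapsTo (MulAut.conj w) (Set.range cs.simple) (Set.range cs.simple)) : w = 1 := by
  refine inv_eq_one.1 (eq_one_of_invParity_simple_eq_zero (cs := cs) fun i => ?_)
  obtain ⟨a, ha⟩ := exists_not_commute_of_notMem
    (notMem_of_isReflection (Λ := Λ) (cs.isReflection_simple i))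
  obtain ⟨j, hj⟩ := (eventually_invParity_conj_pow_eq_zero (cs := cs) w⁻¹ ha).exists
  rwa [invParity_inv_conj hw] at hj

lemma mulAut_eq_one_of_isComplement' [IsTranslationSubgroup Λ] {H : Subgroup W}
    (h : Λ.IsComplement' H) (hbΛ : ∀ a ∈ Λ, b a = a) (hbH : ∀ u ∈ H, b u ∈ H) : b = 1 := by
  have hu (u) (hu : u ∈ H) : b u = u := by
    refine eq_of_mul_inv_mem_of_disjoint h.disjoint (hbH u hu) hu ?_
    refine IsTranslationSubgroup.centralizer_le (Subgroup.mem_centralizer_iff.2 fun a ha => ?_)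
    have ha' : u⁻¹ * a * u ∈ Λ := by
      simpa only [inv_inv] using Subgroup.Normal.conj_mem inferInstance a ha u⁻¹
    have hba : b u * (u⁻¹ * a * u) * (b u)⁻¹ = a := by
      rw [← hbΛ _ ha', ← map_mul, ← map_inv, ← map_mul,
        show u * (u⁻¹ * a * u) * u⁻¹ = a by group, hbΛ a ha]
    calc a * (b u * u⁻¹) = b u * (u⁻¹ * a * u) * (b u)⁻¹ * (b u * u⁻¹) := by rw [hba]
      _ = b u * u⁻¹ * a := by group
  ext x
  obtain ⟨⟨⟨a, ha⟩, ⟨u, hu'⟩⟩, rfl⟩ := h.2 x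
  simp only [map_mul, hbΛ a ha, hu u hu', MulAut.one_apply]

lemma IsHyperspecial.mulAut_eq_one [IsTranslationSubgroup Λ] (hs : IsHyperspecial cs Λ s)
    (hbS : Set.MapsTo b (Set.range cs.simple) (Set.range cs.simple)) (hbs : b s = s)
    (hw : w ∈ Subgroup.closure (Set.range cs.simple \ {s})) (hbΛ : ∀ a ∈ Λ, b a = w * a * w⁻¹) :
    b = 1 := by
  have hbH : Subgroup.closure (Set.range cs.simple \ {s}) ≤
      (Subgroup.closure (Set.range cs.simple \ {s})).comap (b : W →* W) :=
    (Subgroup.closure_le _).2 fun k hk => Subgroup.subset_closure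
      ⟨hbS hk.1, fun hbk => hk.2 (b.injective (Eq.trans hbk hbs.symm))⟩
  have hconj : (MulAut.conj w)⁻¹ * b = 1 := by
    refine mulAut_eq_one_of_isComplement' hs (fun a ha => ?_) fun u hu => ?_ <;>
      rw [MulAut.mul_apply, MulAut.conj_inv_apply]
    · rw [hbΛ a ha]
      group
    · exact Subgroup.mul_mem _ (Subgroup.mul_mem _ (Subgroup.inv_mem _ hw) (hbH hu)) hw
  obtain rfl : MulAut.conj w = b := inv_mul_eq_one.1 hconj
  rw [eq_one_of_mapsTo_conj (Λ := Λ) hbS, map_one]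

end Rigidity

section DiagramAutomorphisms

open scoped Pointwise

variable {cs : CoxeterSystem M W} {a b : MulAut W}

lemma isDiagAut_iff_mem_stabilizer :
    IsDiagAut cs a ↔ a ∈ MulAction.stabilizer (MulAut W) (Set.range cs.simple) :=
  Iff.rfl

lemma IsDiagAut.mul (ha : IsDiagAut cs a) (hb : IsDiagAut cs b) : IsDiagAut cs (a * b) :=
  isDiagAut_iff_mem_stabilizer.2 (mul_mem (isDiagAut_iff_mem_stabilizer.1 ha)
    (isDiagAut_iff_mem_stabilizer.1 hb))

lemma IsDiagAut.inv (ha : IsDiagAut cs a) : IsDiagAut cs a⁻¹ :=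
  isDiagAut_iff_mem_stabilizer.2 (inv_mem (isDiagAut_iff_mem_stabilizer.1 ha))

lemma isDiagAut_of_mapsTo [Finite B]
    (ha : Set.MapsTo a (Set.range cs.simple) (Set.range cs.simple)) : IsDiagAut cs a :=
  Set.eq_of_subset_of_ncard_le ha.image_subset (Set.ncard_image_of_injective _ a.injective).ge
    (Set.finite_range cs.simple)

end DiagramAutomorphisms

namespace AffineData

variable {cs : CoxeterSystem M W} {D : AffineData cs} {a b : MulAut W} {s₁ : W}

lemma centralizer_lam_le (D : AffineData cs) : Subgroup.centralizer D.Lam ≤ D.Lam := by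
  intro x hx
  rw [Subgroup.mem_centralizer_iff] at hx
  have := D.hLam_index
  -- The conjugate `c * x * c⁻¹` only depends on the coset of `c`.
  refine (D.hLam_mem x).2 ((Set.finite_range
    fun q : W ⧸ D.Lam => q.out * x * (q.out)⁻¹).subset fun y hy => ?_)
  obtain ⟨c, rfl⟩ := isConj_iff.1 hy
  obtain ⟨l, hl⟩ := QuotientGroup.mk_out_eq_mul D.Lam c
  refine ⟨(c : W ⧸ D.Lam), ?_⟩
  beta_reduce
  rw [hl, mul_inv_rev, mul_assoc c, hx l l.2]
  group

instance : IsTranslationSubgroup D.Lam where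
  toNormal := D.hLam_normal
  is_comm := ⟨fun a b => Subtype.ext (D.hLam_comm a a.2 b b.2)⟩
  toIsMulTorsionFree :=
    Function.Injective.isMulTorsionFree D.freeIso.toMonoidHom D.freeIso.injective
  centralizer_le := D.centralizer_lam_le

lemma isHyperspecial_s0 (D : AffineData cs) : IsHyperspecial cs D.Lam D.s0 :=
  isHyperspecial_iff_existsUnique.2 D.hs0_hyper

lemma InALam.mul (ha : D.InALam a) (hb : D.InALam b) : D.InALam (a * b) := by
  obtain ⟨haS, u, hu, hau⟩ := ha
  obtain ⟨hbS, v, hv, hbv⟩ := hb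
  refine ⟨haS.mul hbS, u * v, mul_mem hu hv, fun l hl => ?_⟩
  rw [MulAut.mul_apply, hbv l hl, hau _ (D.hLam_normal.conj_mem l hl v)]
  group

lemma InALam.inv (ha : D.InALam a) : D.InALam a⁻¹ := by
  obtain ⟨haS, u, hu, hau⟩ := ha
  refine ⟨haS.inv, u⁻¹, inv_mem hu, fun l hl => ?_⟩
  rw [MulAut.inv_apply, MulEquiv.symm_apply_eq, hau _ (D.hLam_normal.conj_mem l hl u⁻¹)]
  group

lemma InALam.eq_one (ha : D.InALam a) (ha₀ : a D.s0 = D.s0) : a = 1 := by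
  obtain ⟨haS, w, hw, haw⟩ := ha
  exact D.isHyperspecial_s0.mulAut_eq_one (fun _ hs => haS ▸ Set.mem_image_of_mem a hs) ha₀ hw haw

lemma st_s0 (D : AffineData cs) : D.st D.s0 = D.s0 := by
  by_contra hne
  have hst : D.st D.s0 ∈ D.WJ := Subgroup.subset_closure ⟨D.hst_S _ D.hs0_S, hne⟩
  have hs₀ : D.s0 ∈ D.WJ := by
    rw [← D.hst_inv D.s0, D.hst_J _ hst]
    exact mul_mem (mul_mem D.hwJ_mem hst) D.hwJ_mem
  exact (mem_of_simple_mem_closure Set.sdiff_subset D.hs0_S hs₀).2 rfl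

lemma wJ_mul_self (D : AffineData cs) : D.wJ * D.wJ = 1 := by
  simpa only [map_one, mul_one, eq_comm] using D.hst_J 1 (one_mem _)

lemma wJ_inv (D : AffineData cs) : D.wJ⁻¹ = D.wJ :=
  inv_eq_of_mul_eq_one_right D.wJ_mul_self

lemma conj_wJ_mem_range_simple {s : W} (hs : s ∈ D.Jset) :
    D.wJ * s * D.wJ⁻¹ ∈ Set.range cs.simple := by
  rw [D.wJ_inv, ← D.hst_J s (Subgroup.subset_closure hs)]
  exact D.hst_S s hs.1

lemma conj_wJ_conj_s0 {r : W} (hr : r ∈ D.WJ) (hr_inv : r⁻¹ = r) (hs₀r : D.s0 * r ∈ D.Lam) :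
    D.wJ * (r * D.s0 * r) * D.wJ⁻¹ = D.s0 := by
  have hs₀_inv := (isReflection_of_mem subset_rfl D.hs0_S).inv
  calc D.wJ * (r * D.s0 * r) * D.wJ⁻¹ = (D.wJ * (D.s0 * r) * D.wJ⁻¹)⁻¹ * (D.wJ * r * D.wJ) := by
        simp only [mul_inv_rev, hr_inv, hs₀_inv, D.wJ_inv, mul_assoc]
        rw [← mul_assoc D.wJ D.wJ, D.wJ_mul_self, one_mul]
    _ = D.st (D.s0 * r * r⁻¹) := by rw [map_mul, D.hst_Lam _ hs₀r, hr_inv, D.hst_J r hr]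
    _ = D.s0 := by rw [mul_inv_cancel_right, D.st_s0]

lemma exists_inALam_apply_eq_s0 (hs₁ : s₁ ∈ Set.range cs.simple)
    (hh₁ : IsHyperspecial cs D.Lam s₁) : ∃ a, D.InALam a ∧ a s₁ = D.s0 := by
  rcases eq_or_ne s₁ D.s0 with rfl | hne
  · exact ⟨1, ⟨Set.image_id _, 1, one_mem _, by simp⟩, rfl⟩
  have := D.finB
  have := D.hLam_index
  have hKJ : Subgroup.closure (Set.range cs.simple \ {D.s0, s₁}) ≤ D.WJ :=
    Subgroup.closure_mono (Set.sdiff_subset_sdiff_right (by simp))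
  obtain ⟨w, hw⟩ := exists_isLongest (D.hWJ_fin.subset hKJ)
  obtain ⟨ψ, hψΛ, hψK, hψ₀, hψ₁⟩ :=
    hw.exists_mulAut_swap D.hs0_S D.isHyperspecial_s0 hs₁ hh₁ hne
  have ha₁ : (MulAut.conj D.wJ * ψ) s₁ = D.s0 := by
    rw [MulAut.mul_apply, hψ₁, MulAut.conj_apply]
    exact conj_wJ_conj_s0
      (mul_mem (mul_mem (hKJ hw.1) (Subgroup.subset_closure ⟨hs₁, hne⟩)) (inv_mem (hKJ hw.1)))
      ((isReflection_of_mem subset_rfl hs₁).conj w).inv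
      (hw.mul_conj_mem D.hs0_S D.isHyperspecial_s0 hs₁ hh₁ hne)
  refine ⟨MulAut.conj D.wJ * ψ, ⟨isDiagAut_of_mapsTo fun s hs => ?_, D.wJ * w,
    mul_mem D.hwJ_mem (hKJ hw.1), fun l hl => ?_⟩, ha₁⟩
  · by_cases hs₁' : s = s₁
    · rw [hs₁', ha₁]
      exact D.hs0_S
    rw [MulAut.mul_apply, MulAut.conj_apply]
    refine conj_wJ_mem_range_simple ?_
    by_cases hs₀ : s = D.s0
    · rw [hs₀, hψ₀]
      exact ⟨hs₁, hne⟩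
    · have hs' : s ∈ Set.range cs.simple \ {D.s0, s₁} := ⟨hs, by simp [hs₀, hs₁']⟩
      rw [hψK s hs']
      have hconj := hw.conj_mem Set.sdiff_subset hs'
      exact ⟨hconj.1, fun h => hconj.2 (Or.inl h)⟩
  · rw [MulAut.mul_apply, hψΛ l hl, MulAut.conj_apply]
    group

end AffineData

/-- For every hyperspecial vertex `s₁ ∈ S`, there exists a unique element
`a` of the coset `A_Λ* = {a' ∘ * : a' ∈ A_Λ} ⊆ Aut(W,S)` such that `a(s₀) = s₁`. -/
theorem exists_unique_dia (cs : CoxeterSystem M W) (D : AffineData cs)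
    (s1 : W) (hs1_S : s1 ∈ Set.range cs.simple)
    (hs1_hyper : ∀ w : W, ∃! u : W,
      u ∈ Subgroup.closure (Set.range cs.simple \ {s1}) ∧ w * u⁻¹ ∈ D.Lam) :
    ∃! c : MulAut W, D.InALamStar c ∧ c D.s0 = s1 := by
  obtain ⟨a, ha, hs₁⟩ := AffineData.exists_inALam_apply_eq_s0 hs1_S
    (isHyperspecial_iff_existsUnique.2 hs1_hyper)
  refine ⟨a⁻¹ * D.st, ⟨⟨a⁻¹, ha.inv, rfl⟩, ?_⟩, ?_⟩
  · rw [MulAut.mul_apply, D.st_s0, ← hs₁, MulAut.inv_apply_self]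
  · rintro _ ⟨⟨b, hb, rfl⟩, hbs₀⟩
    rw [MulAut.mul_apply, D.st_s0] at hbs₀
    have hab : a * b = 1 := (ha.mul hb).eq_one (by rw [MulAut.mul_apply, hbs₀, hs₁])
    rw [eq_inv_of_mul_eq_one_right hab]

end LY
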